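/- arXiv:1501.04185 — 2 statements merged into one kernel-verified Lean document; each statement's English description precedes it below -/
import Mathlib

section
/- Let S(X) denote the number of integers q ≤ X with q ≡ 1 (mod 4) for which the Erdős conjecture holds mod q. Then liminf_{X→∞} S(X)/(X/4) ≥ 0.80. -/
open Filter Topology Finset

/-- `f : ℕ → ℤ` is Erdősian mod `q`: periodic with period `q`, takes values `±1`
off multiples of `q`, and `0` on multiples of `q`. -/
def IsErdosian (q : ℕ) (f : ℕ → ℤ) : Prop :=
  (∀ n : ℕ, 1 ≤ n → f (n + q) = f n) ∧
  (∀ n : ℕ, 1 ≤ n → ¬ q ∣ n → f n = 1 ∨ f n = -1) ∧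
  (∀ n : ℕ, 1 ≤ n → q ∣ n → f n = 0)

/-- The Erdős conjecture is false mod `q`: there is an Erdősian function mod `q`
whose partial sums `∑_{n=1}^N f(n)/n` tend to `0`. -/
def ErdosConjectureFalse (q : ℕ) : Prop :=
  ∃ f : ℕ → ℤ, IsErdosian q f ∧
    Tendsto (fun N : ℕ => ∑ n ∈ Finset.Icc 1 N, (f n : ℝ) / n) atTop (nhds 0)

/-- The Erdős conjecture holds (is true) mod `q`. -/
def ErdosConjectureHolds (q : ℕ) : Prop := ¬ ErdosConjectureFalse q

/-! Suppose that `∑ f(n) / n = 0` for an Erdősian function `f` modulo `q > 1`. Expanding `f` in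
additive characters turns this into a linear relation between the logarithms of the numbers
`1 - ζ`, where `ζ ≠ 1` runs over the `q`-th roots of unity, with coefficients in the `q`-th
cyclotomic field. By Baker's theorem every algebraic relation between logarithms of algebraic
numbers is a combination of rational ones, so the Galois group may be applied to the coefficients
alone; hence `∑ f(u n) / n = 0` for every `u` prime to `q` (Okada). Multiplying the Dirichlet series
of `f(u n)` by that of the Möbius function on the class of `u` and summing over `u` gives
`∑ f(n) / n = 0` over those `n` all of whose prime factors divide `q`. Since `∑ 1 / n = q / φ(q)`
over the same `n`, adding the two series with the sign `f(1)` leaves nonnegative terms whose first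
one is `2`, so `q / φ(q) ≥ 2`.

The average of `(q / φ(q)) ^ 6` over `q ≡ 1 (mod 4)` is at most
`∏ (1 + ((p / (p - 1)) ^ 6 - 1) / p) ≤ 12.6`, the product being over the odd primes. By Chebyshev's
inequality the density of the `q` with `q / φ(q) ≥ 2` is then at most
`(12.6 - 1) / (2 ^ 6 - 1) < 0.2`. -/

open NumberField

/-! ### Heights and Siegel's lemma -/

section Heights

variable {K : Type*} [Field K] [NumberField K]

theorem house_le_of_forall_norm_le {x : K} {B : ℝ} (h : ∀ σ : K →+* ℂ, ‖σ x‖ ≤ B) :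
    house x ≤ B := by
  obtain ⟨σ, -, hσ⟩ := exists_mem_eq_sup' (univ_nonempty (α := K →+* ℂ)) fun φ ↦ ‖φ x‖₊
  rw [house_eq_sup', hσ]
  exact h σ

theorem one_le_norm_mul_house_pow (φ : K →+* ℂ) {x : 𝓞 K} (hx : x ≠ 0) {H : ℝ} (hH : 1 ≤ H)
    (hxH : house (x : K) ≤ H) : 1 ≤ ‖φ x‖ * H ^ Module.finrank ℚ K := by
  have hnorm : 1 ≤ ‖Algebra.norm ℚ (x : K)‖ := by
    have hne : Algebra.norm ℤ x ≠ 0 := by rwa [Ne, Algebra.norm_eq_zero_iff]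
    rw [← Algebra.coe_norm_int (K := K) x, ← Rat.norm_cast_real, Rat.cast_intCast,
      Real.norm_eq_abs]
    exact_mod_cast Int.one_le_abs hne
  calc 1 ≤ ‖Algebra.norm ℚ (x : K)‖ := hnorm
    _ ≤ ‖φ x‖ * house (x : K) ^ (Module.finrank ℚ K - 1) := norm_norm_le_norm_mul_house_pow _ φ
    _ ≤ ‖φ x‖ * H ^ (Module.finrank ℚ K - 1) := by gcongr; exact house_nonneg _
    _ ≤ ‖φ x‖ * H ^ Module.finrank ℚ K := by gcongr; exact Nat.sub_le ..

end Heights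

theorem abs_mul_rpow_le {C b A e : ℝ} (hb : 1 ≤ b) (hA : 1 ≤ A) (he₀ : 0 ≤ e) (he₁ : e ≤ 1) :
    |(C * b * A) ^ e| ≤ max 1 |C| * b * A := by
  have hone : 1 ≤ max 1 |C| * b * A := one_le_mul_of_one_le_of_one_le
    (one_le_mul_of_one_le_of_one_le (le_max_left _ _) hb) hA
  calc |(C * b * A) ^ e| ≤ |C * b * A| ^ e := Real.abs_rpow_le_abs_rpow _ _
    _ ≤ (max 1 |C| * b * A) ^ e := by
        rw [abs_mul, abs_mul, abs_of_pos (by linarith : 0 < b), abs_of_pos (by linarith : 0 < A)]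
        gcongr
        exact le_max_right _ _
    _ ≤ (max 1 |C| * b * A) ^ (1 : ℝ) := Real.rpow_le_rpow_of_exponent_le hone he₁
    _ = _ := Real.rpow_one _

theorem exists_siegel_const (K : Type*) [Field K] [NumberField K] : ∃ C : ℝ, 1 ≤ C ∧
    ∀ (α β : Type*) [Fintype α] [Fintype β] [Nonempty α] (a : Matrix α β (𝓞 K)) (A : ℝ), 1 ≤ A →
      2 * Fintype.card α ≤ Fintype.card β → (∀ k l, house (a k l : K) ≤ A) →
      ∃ ξ : β → 𝓞 K, ξ ≠ 0 ∧ (∀ k, ∑ l, a k l * ξ l = 0) ∧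
        ∀ l, house (ξ l : K) ≤ C * (C * Fintype.card β * A) := by
  classical
  obtain ⟨C, hC⟩ : ∃ C : ℝ, ∀ (α β : Type _) [Fintype α] [Fintype β] (a : Matrix α β (𝓞 K))
      (A : ℝ), a ≠ 0 → 0 < Fintype.card α → Fintype.card α < Fintype.card β →
      (∀ k l, house (algebraMap (𝓞 K) K (a k l)) ≤ A) →
      ∃ ξ : β → 𝓞 K, ξ ≠ 0 ∧ Matrix.mulVec a ξ = 0 ∧
        ∀ l, house (ξ l).1 ≤ C * ((C * Fintype.card β * A) ^
          ((Fintype.card α : ℝ) / (Fintype.card β - Fintype.card α))) :=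
    ⟨_, fun α β _ _ a A ha hα hαβ hA ↦
      house.exists_ne_zero_int_vec_house_le K a ha hα hαβ rfl hA rfl⟩
  have hC₁ : 1 ≤ max 1 |C| := le_max_left _ _
  refine ⟨max 1 |C|, hC₁, fun α β _ _ _ a A hA hαβ ha ↦ ?_⟩
  have hα : 0 < Fintype.card α := Fintype.card_pos
  have hβ : (1 : ℝ) ≤ Fintype.card β := by exact_mod_cast (by omega)
  rcases eq_or_ne a 0 with rfl | ha₀
  · have : Nonempty β := Fintype.card_pos_iff.1 (by omega)
    refine ⟨1, one_ne_zero, by simp, fun l ↦ ?_⟩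
    have hone : house ((1 : 𝓞 K) : K) = 1 := by simpa using house_intCast (K := K) 1
    rw [Pi.one_apply, hone]
    exact one_le_mul_of_one_le_of_one_le hC₁
      (one_le_mul_of_one_le_of_one_le (one_le_mul_of_one_le_of_one_le hC₁ hβ) hA)
  · obtain ⟨ξ, hξ, hker, hbound⟩ := hC α β a A ha₀ hα (by omega) ha
    refine ⟨ξ, hξ, congrFun hker, fun l ↦ (hbound l).trans ?_⟩
    have hαβ' : (2 : ℝ) * Fintype.card α ≤ Fintype.card β := by exact_mod_cast hαβ
    have hα' : (0 : ℝ) < Fintype.card α := by exact_mod_cast hα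
    have hrpow := abs_mul_rpow_le (C := C) hβ hA
      (div_nonneg hα'.le (by linarith : (0 : ℝ) ≤ Fintype.card β - Fintype.card α))
      ((div_le_one (by linarith)).2 (by linarith))
    refine (le_abs_self _).trans ?_
    rw [abs_mul]
    gcongr
    exact le_max_right _ _

/-! ### A Schwarz lemma with multiplicities -/

theorem exists_eq_prod_sub_mul (l : Multiset ℂ) {f : ℂ → ℂ} (hf : Differentiable ℂ f)
    (h : ∀ a ∈ l, (l.count a : ℕ∞) ≤ analyticOrderAt f a) :
    ∃ g : ℂ → ℂ, Differentiable ℂ g ∧ ∀ z, f z = (l.map fun a ↦ z - a).prod * g z := by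
  induction l using Multiset.induction_on generalizing f with
  | empty => exact ⟨f, hf, by simp⟩
  | cons a l ih =>
    have hfa : f a = 0 := by
      apply apply_eq_zero_of_analyticOrderAt_ne_zero
      have := h a (Multiset.mem_cons_self a l)
      rw [Multiset.count_cons_self] at this
      exact (lt_of_lt_of_le (by simp) this).ne'
    have hslope : Differentiable ℂ (dslope f a) := by
      rw [← differentiableOn_univ] at hf ⊢
      exact (Complex.differentiableOn_dslope univ_mem).2 hf
    have hfactor (z : ℂ) : f z = (z - a) * dslope f a z := by
      simpa [hfa] using (sub_smul_dslope f a z).symm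
    have horder (b : ℂ) : analyticOrderAt f b =
        analyticOrderAt (fun z ↦ z - a) b + analyticOrderAt (dslope f a) b := by
      rw [← analyticOrderAt_mul (by fun_prop) (hslope.analyticAt b)]
      exact congrArg (analyticOrderAt · b) (funext hfactor)
    obtain ⟨g, hg, hgf⟩ := ih hslope fun b hb ↦ by
      have hcount := h b (Multiset.mem_cons_of_mem hb)
      rw [horder] at hcount
      rcases eq_or_ne b a with rfl | hba
      · rw [Multiset.count_cons_self, analyticOrderAt_id_sub_const_self, Nat.cast_add, add_comm,
          Nat.cast_one] at hcount
        exact (ENat.add_le_add_iff_left (by simp)).1 hcount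
      · rwa [Multiset.count_cons_of_ne hba, analyticOrderAt_id_sub_const_of_ne hba, zero_add]
          at hcount
    refine ⟨g, hg, fun z ↦ ?_⟩
    rw [hfactor, hgf, Multiset.map_cons, Multiset.prod_cons, mul_assoc]

theorem norm_le_mul_div_pow_card {l : Multiset ℂ} {f : ℂ → ℂ} (hf : Differentiable ℂ f)
    (h : ∀ a ∈ l, (l.count a : ℕ∞) ≤ analyticOrderAt f a) {c w : ℂ} {r δ ρ B : ℝ}
    (hw : w ∈ Metric.ball c r) (hδ : ∀ a ∈ l, ‖w - a‖ ≤ δ) (hρ₀ : 0 < ρ)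
    (hρ : ∀ a ∈ l, ∀ z ∈ Metric.sphere c r, ρ ≤ ‖z - a‖)
    (hB : ∀ z ∈ Metric.sphere c r, ‖f z‖ ≤ B) : ‖f w‖ ≤ B * (δ / ρ) ^ l.card := by
  obtain ⟨g, hg, hfg⟩ := exists_eq_prod_sub_mul l hf h
  have hnorm (z : ℂ) : ‖f z‖ = (l.map fun a ↦ ‖z - a‖).prod * ‖g z‖ := by
    rw [hfg, norm_mul]
    congr 1
    simpa using map_multiset_prod (normHom : ℂ →*₀ ℝ) (l.map fun a ↦ z - a)
  have hgw : ‖g w‖ ≤ B / ρ ^ l.card := by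
    refine Complex.norm_le_of_forall_mem_frontier_norm_le (U := Metric.ball c r)
      Metric.isBounded_ball hg.diffContOnCl (fun z hz ↦ ?_) (subset_closure hw)
    have hz' : z ∈ Metric.sphere c r := Metric.frontier_ball_subset_sphere hz
    have hpow : ρ ^ l.card ≤ (l.map fun a ↦ ‖z - a‖).prod := by
      simpa using Multiset.prod_map_le_prod_map₀ (fun _ ↦ ρ) _ (fun _ _ ↦ hρ₀.le)
        fun a ha ↦ hρ a ha z hz'
    rw [le_div_iff₀ (by positivity), mul_comm]
    refine le_trans ?_ ((hnorm z).symm.le.trans (hB z hz'))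
    gcongr
  have hpow : (l.map fun a ↦ ‖w - a‖).prod ≤ δ ^ l.card := by
    simpa using Multiset.prod_map_le_prod_map₀ _ (fun _ ↦ δ) (fun _ _ ↦ norm_nonneg _) hδ
  calc ‖f w‖ ≤ δ ^ l.card * (B / ρ ^ l.card) := by
        rw [hnorm]
        gcongr
        exact (Multiset.prod_map_nonneg fun _ _ ↦ norm_nonneg _).trans hpow
    _ = B * (δ / ρ) ^ l.card := by rw [div_pow]; ring

theorem norm_natCast_le_of_iteratedDeriv_eq_zero {f : ℂ → ℂ} (hf : Differentiable ℂ f)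
    {S S' T : ℕ} (hSS' : S ≤ S') (h : ∀ s < S, ∀ r < T, iteratedDeriv r f s = 0) {B : ℝ}
    (hB : ∀ z : ℂ, ‖z‖ ≤ 4 * S' → ‖f z‖ ≤ B) {s : ℕ} (hs : s < S') :
    ‖f s‖ ≤ B * (1 / 3) ^ (T * S) := by
  have hS' : (0 : ℝ) < S' := by exact_mod_cast s.zero_le.trans_lt hs
  have hs' : (s : ℝ) < S' := by exact_mod_cast hs
  have hzero : ∀ a ∈ T • (range S).val.map (Nat.cast : ℕ → ℂ), ∃ j : ℕ, (j : ℝ) ≤ S' ∧ j < S ∧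
      (j : ℂ) = a := fun a ha ↦ by
    obtain ⟨j, hj, rfl⟩ := Multiset.mem_map.1 (Multiset.mem_of_mem_nsmul ha)
    have hjS : j < S := by simpa using hj
    exact ⟨j, by exact_mod_cast hjS.le.trans hSS', hjS, rfl⟩
  have hnodup : ((range S).val.map (Nat.cast : ℕ → ℂ)).Nodup :=
    (range S).nodup.map Nat.cast_injective
  have key := norm_le_mul_div_pow_card (l := T • (range S).val.map (Nat.cast : ℕ → ℂ)) hf
    (c := 0) (w := s) (r := 4 * S') (δ := S') (ρ := 3 * S') (B := B) ?_ ?_ ?_ (by positivity) ?_ ?_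
  · rw [show (S' : ℝ) / (3 * S') = 1 / 3 by field_simp] at key
    simpa using key
  · intro a ha
    obtain ⟨j, -, hj, rfl⟩ := hzero a ha
    refine le_trans ?_ ((natCast_le_analyticOrderAt_iff_iteratedDeriv_eq_zero
      (hf.analyticAt _)).2 (h j hj))
    rw [Multiset.count_nsmul]
    exact_mod_cast mul_le_of_le_one_right' (Multiset.nodup_iff_count_le_one.1 hnodup _)
  · rw [mem_ball_zero_iff, Complex.norm_natCast]
    linarith
  · intro a ha
    obtain ⟨j, hj, -, rfl⟩ := hzero a ha
    rw [← Complex.ofReal_natCast, ← Complex.ofReal_natCast, ← Complex.ofReal_sub,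
      Complex.norm_real, Real.norm_eq_abs, abs_le]
    constructor <;> linarith [j.cast_nonneg (α := ℝ), s.cast_nonneg (α := ℝ)]
  · intro a ha z hz
    obtain ⟨j, hj, -, rfl⟩ := hzero a ha
    have := norm_sub_norm_le z j
    rw [mem_sphere_zero_iff_norm.1 hz, Complex.norm_natCast] at this
    linarith
  · exact fun z hz ↦ hB z (mem_sphere_zero_iff_norm.1 hz).le

/-! ### Exponential polynomials and extrapolation of their zeros -/

theorem iteratedDeriv_sum_mul_exp {Λ : Type*} [Fintype Λ] (c ω : Λ → ℂ) (r : ℕ) :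
    iteratedDeriv r (fun z : ℂ ↦ ∑ l, c l * Complex.exp (z * ω l)) =
      fun z ↦ ∑ l, c l * ω l ^ r * Complex.exp (z * ω l) := by
  induction r with
  | zero => simp
  | succ r ih =>
    rw [iteratedDeriv_succ, ih]
    ext z
    refine HasDerivAt.deriv (HasDerivAt.fun_sum fun l _ ↦ ?_)
    have hlin : HasDerivAt (fun z : ℂ ↦ z * ω l) (ω l) z := by
      simpa using (hasDerivAt_id z).mul_const (ω l)
    convert! hlin.cexp.const_mul (c l * ω l ^ r) using 1
    ring

theorem norm_sum_mul_prod_pow_mul_le {Λ ι : Type*} [Fintype Λ] [Fintype ι] {c e : Λ → ℂ}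
    {x : Λ → ι → ℂ} {Q X E : ℝ} (hc : ∑ l, ‖c l‖ ≤ Real.exp Q) (hX : 0 ≤ X)
    (hx : ∀ l i, ‖x l i‖ ≤ Real.exp X) (he : ∀ l, ‖e l‖ ≤ Real.exp E) {T : ℕ} {m : ι → ℕ}
    (hm : ∑ i, m i ≤ T) :
    ‖∑ l, c l * (∏ i, x l i ^ m i) * e l‖ ≤ Real.exp (Q + T * X + E) := by
  have hprod (l : Λ) : ‖∏ i, x l i ^ m i‖ ≤ Real.exp (T * X) := calc
    ‖∏ i, x l i ^ m i‖ = ∏ i, ‖x l i‖ ^ m i := by simp_rw [norm_prod, norm_pow]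
    _ ≤ ∏ i, Real.exp X ^ m i := by gcongr with i; exact hx l i
    _ = Real.exp ((∑ i, m i : ℕ) * X) := by rw [prod_pow_eq_pow_sum, ← Real.exp_nat_mul]
    _ ≤ Real.exp (T * X) := by gcongr
  calc ‖∑ l, c l * (∏ i, x l i ^ m i) * e l‖
      ≤ ∑ l, ‖c l‖ * (Real.exp (T * X) * Real.exp E) := by
        refine norm_sum_le_of_le _ fun l _ ↦ ?_
        rw [mul_assoc, norm_mul, norm_mul]
        gcongr
        exacts [hprod l, he l]
    _ ≤ Real.exp Q * (Real.exp (T * X) * Real.exp E) := by rw [← sum_mul]; gcongr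
    _ = Real.exp (Q + T * X + E) := by rw [← Real.exp_add, ← Real.exp_add, add_assoc]

theorem sum_mul_eval_eq_zero {R Λ ι : Type*} [CommSemiring R] [Fintype ι] {s : Finset Λ}
    {c : Λ → R} {x : Λ → ι → R} {N : ℕ}
    (h : ∀ m : ι → ℕ, ∑ i, m i < N → ∑ l ∈ s, c l * ∏ i, x l i ^ m i = 0)
    {P : MvPolynomial ι R} (hP : P.totalDegree < N) :
    ∑ l ∈ s, c l * MvPolynomial.eval (x l) P = 0 := by
  simp_rw [MvPolynomial.eval_eq', mul_sum]
  rw [sum_comm]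
  refine sum_eq_zero fun m hm ↦ ?_
  have hdeg : ∑ i, m i < N := by
    simpa [Finsupp.sum_fintype] using (MvPolynomial.le_totalDegree hm).trans_lt hP
  simp_rw [mul_left_comm (c _), ← mul_sum, h m hdeg, mul_zero]

/-- `Vanishes p a x T S` says that the exponential polynomials
`s ↦ ∑ l, p l * x l ^ m * a l ^ s` with `|m| < T` have zeros at all natural numbers `s < S`. -/
def Vanishes {R Λ ι : Type*} [CommSemiring R] [Fintype Λ] [Fintype ι] (p a : Λ → R)
    (x : Λ → ι → R) (T S : ℕ) : Prop :=
  ∀ m : ι → ℕ, ∑ i, m i < T → ∀ s < S, ∑ l, p l * (∏ i, x l i ^ m i) * a l ^ s = 0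

/-- The frequencies of the auxiliary function in Baker's argument: algebraic integers `x l i` and
`a l` of `K`, embedded into `ℂ` by `φ`, and complex numbers `u i` such that `∑ i, x l i * u i` is a
logarithm of `a l`. -/
structure FrequencySystem {K : Type*} [Field K] [NumberField K] (φ : K →+* ℂ) (Λ ι : Type*)
    [Fintype ι] where
  x : Λ → ι → 𝓞 K
  a : Λ → 𝓞 K
  u : ι → ℂ
  exp_sum : ∀ l, Complex.exp (∑ i, φ (x l i) * u i) = φ (a l)

namespace FrequencySystem

variable {K : Type*} [Field K] [NumberField K] {φ : K →+* ℂ} {Λ ι : Type*} [Fintype ι]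
  (F : FrequencySystem φ Λ ι)

/-- The logarithm `∑ i, x l i * u i` of `a l` provided by a frequency system. -/
noncomputable def freq (l : Λ) : ℂ := ∑ i, φ (F.x l i) * F.u i

/-- All conjugates of the `x l i` are at most `exp X`, all conjugates of the `a l` are at most
`exp Y`, and all frequencies are at most `Y`. -/
structure Bounded (X Y : ℝ) : Prop where
  nonneg_left : 0 ≤ X
  nonneg_right : 0 ≤ Y
  norm_x_le : ∀ (σ : K →+* ℂ) l i, ‖σ (F.x l i)‖ ≤ Real.exp X
  norm_a_le : ∀ (σ : K →+* ℂ) l, ‖σ (F.a l)‖ ≤ Real.exp Y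
  norm_freq_le : ∀ l, ‖F.freq l‖ ≤ Y

variable {F} {X Y : ℝ}

theorem Bounded.norm_mul_exp_le (hF : F.Bounded X Y) {z : ℂ} {R : ℝ} (hz : ‖z‖ ≤ R) (l : Λ) :
    ‖Complex.exp (z * F.freq l)‖ ≤ Real.exp (R * Y) := by
  rw [Complex.norm_exp]
  gcongr
  calc (z * F.freq l).re ≤ ‖z‖ * ‖F.freq l‖ := (Complex.re_le_norm _).trans (norm_mul_le _ _)
    _ ≤ R * Y := by
        gcongr
        exacts [(norm_nonneg z).trans hz, hF.norm_freq_le l]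

variable [Fintype Λ] {p : Λ → 𝓞 K} {m : ι → ℕ} {T S S' : ℕ} {Q : ℝ}

theorem map_sum_eq_sum_exp (s : ℕ) :
    φ (∑ l, p l * (∏ i, F.x l i ^ m i) * F.a l ^ s : 𝓞 K) =
      ∑ l, φ (p l) * (∏ i, φ (F.x l i) ^ m i) * Complex.exp (s * F.freq l) := by
  simp only [map_sum, map_mul, map_prod, map_pow, Complex.exp_nat_mul, freq, F.exp_sum]

/-- Powers of `freq l` are polynomials in the `x l i` with coefficients independent of `l`, so the
derivatives of the auxiliary functions are linear combinations of auxiliary functions. -/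
theorem sum_mul_freq_pow_mul_exp_eq_zero (h : Vanishes p F.a F.x (2 * T) S) (hm : ∑ i, m i < T)
    {r : ℕ} (hr : r < T) {s : ℕ} (hs : s < S) :
    ∑ l, φ (p l) * (∏ i, φ (F.x l i) ^ m i) * F.freq l ^ r * Complex.exp (s * F.freq l) = 0 := by
  set P : MvPolynomial ι ℂ := MvPolynomial.monomial (Finsupp.equivFunOnFinite.symm m) 1 *
    (∑ i, MvPolynomial.C (F.u i) * MvPolynomial.X i) ^ r with hP
  have hdeg : P.totalDegree < 2 * T := by
    have hmonomial : (MvPolynomial.monomial (Finsupp.equivFunOnFinite.symm m)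
        (1 : ℂ)).totalDegree = ∑ i, m i := by
      simp [MvPolynomial.totalDegree_monomial, Finsupp.sum_fintype]
    have hlinear : (∑ i, MvPolynomial.C (F.u i) * MvPolynomial.X i).totalDegree ≤ 1 :=
      MvPolynomial.totalDegree_finsetSum_le fun i _ ↦
        (MvPolynomial.totalDegree_mul _ _).trans (by simp)
    calc P.totalDegree ≤ ∑ i, m i + r * 1 := (MvPolynomial.totalDegree_mul _ _).trans
          (add_le_add hmonomial.le ((MvPolynomial.totalDegree_pow _ _).trans (by gcongr)))
      _ < 2 * T := by omega
  have heval (l : Λ) : MvPolynomial.eval (fun i ↦ φ (F.x l i)) P =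
      (∏ i, φ (F.x l i) ^ m i) * F.freq l ^ r := by
    simp [hP, freq, MvPolynomial.eval_monomial, mul_comm, Finsupp.prod_fintype]
  have key := sum_mul_eval_eq_zero (s := univ)
    (c := fun l ↦ φ (p l) * Complex.exp (s * F.freq l)) (x := fun l i ↦ φ (F.x l i))
    (fun m hm ↦ ?_) hdeg
  · simp_rw [heval] at key
    rw [← key]
    exact sum_congr rfl fun l _ ↦ by ring
  · rw [← map_zero φ, ← map_zero (algebraMap (𝓞 K) K), ← h m hm s hs, map_sum_eq_sum_exp]
    exact sum_congr rfl fun l _ ↦ by ring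

theorem Bounded.norm_sum_exp_le (hF : F.Bounded X Y)
    (hp : ∀ σ : K →+* ℂ, ∑ l, ‖σ (p l)‖ ≤ Real.exp Q) (hSS' : S ≤ S')
    (h : Vanishes p F.a F.x (2 * T) S) (hm : ∑ i, m i < T) {s : ℕ} (hs : s < S') :
    ‖∑ l, φ (p l) * (∏ i, φ (F.x l i) ^ m i) * Complex.exp (s * F.freq l)‖ ≤
      Real.exp (Q + T * X + 4 * S' * Y) * (1 / 3) ^ (T * S) := by
  refine norm_natCast_le_of_iteratedDeriv_eq_zero
    (f := fun z ↦ ∑ l, φ (p l) * (∏ i, φ (F.x l i) ^ m i) * Complex.exp (z * F.freq l))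
    (by fun_prop) hSS' (fun s hs r hr ↦ ?_) (fun z hz ↦ ?_) hs
  · rw [iteratedDeriv_sum_mul_exp]
    exact sum_mul_freq_pow_mul_exp_eq_zero h hm hr hs
  · exact norm_sum_mul_prod_pow_mul_le (hp φ) hF.nonneg_left (hF.norm_x_le φ)
      (hF.norm_mul_exp_le hz) hm.le

theorem Bounded.house_sum_le (hF : F.Bounded X Y)
    (hp : ∀ σ : K →+* ℂ, ∑ l, ‖σ (p l)‖ ≤ Real.exp Q) (hm : ∑ i, m i ≤ T) {s : ℕ} (hs : s ≤ S) :
    house ((∑ l, p l * (∏ i, F.x l i ^ m i) * F.a l ^ s : 𝓞 K) : K) ≤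
      Real.exp (Q + T * X + S * Y) := by
  refine house_le_of_forall_norm_le fun σ ↦ ?_
  simp only [map_sum, map_mul, map_prod, map_pow]
  refine norm_sum_mul_prod_pow_mul_le (hp σ) hF.nonneg_left (hF.norm_x_le σ) (fun l ↦ ?_) hm
  rw [norm_pow, Real.exp_nat_mul]
  exact (pow_le_pow_left₀ (norm_nonneg _) (hF.norm_a_le σ l) s).trans
    (pow_le_pow_right₀ (Real.one_le_exp hF.nonneg_right) hs)

theorem Bounded.vanishes_of_lt (hF : F.Bounded X Y) (hQ : 0 ≤ Q)
    (hp : ∀ σ : K →+* ℂ, ∑ l, ‖σ (p l)‖ ≤ Real.exp Q) (hSS' : S ≤ S')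
    (hlt : (Module.finrank ℚ K + 1) * (Q + T * X + 4 * S' * Y) < T * S)
    (h : Vanishes p F.a F.x (2 * T) S) : Vanishes p F.a F.x T S' := by
  intro m hm s hs
  by_contra hne
  have := hF.nonneg_left
  have := hF.nonneg_right
  set W : ℝ := Q + T * X + 4 * S' * Y with hW
  have hhouse := (hF.house_sum_le hp hm.le hs.le).trans
    (Real.exp_le_exp.2 (show Q + T * X + S' * Y ≤ W by
      rw [hW]; nlinarith [S'.cast_nonneg (α := ℝ)]))
  have hlower := one_le_norm_mul_house_pow φ hne (Real.one_le_exp (by positivity)) hhouse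
  have hupper := hF.norm_sum_exp_le hp hSS' h hm hs
  have hthird : (1 / 3 : ℝ) ^ (T * S) ≤ Real.exp (-(T * S)) := by
    have : (1 / 3 : ℝ) ≤ Real.exp (-1) := by
      rw [Real.exp_neg, one_div]
      exact inv_anti₀ (Real.exp_pos _) (by linarith [Real.exp_one_lt_d9])
    calc (1 / 3 : ℝ) ^ (T * S) ≤ Real.exp (-1) ^ (T * S) := by gcongr
      _ = Real.exp (-(T * S)) := by rw [← Real.exp_nat_mul]; push_cast; ring_nf
  rw [map_sum_eq_sum_exp] at hlower
  have hone : 1 ≤ Real.exp W * Real.exp (-(T * S)) * Real.exp W ^ Module.finrank ℚ K := by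
    refine hlower.trans ?_
    gcongr
    exact hupper.trans (by gcongr)
  rw [← Real.exp_nat_mul, ← Real.exp_add, ← Real.exp_add, Real.one_le_exp_iff] at hone
  linarith

/-- Each step halves the range of multiplicities and multiplies the range of zeros by `M`; the
hypothesis is inherited since both sides of `hlt` are at most multiplied by the same factor. -/
theorem Bounded.vanishes_pow_mul (hF : F.Bounded X Y) (hQ : 0 ≤ Q)
    (hp : ∀ σ : K →+* ℂ, ∑ l, ‖σ (p l)‖ ≤ Real.exp Q) {M : ℕ} (hM : 0 < M)
    (hlt : (Module.finrank ℚ K + 1) * (Q + T * X + 4 * (M * S) * Y) < T * S) (J : ℕ)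
    (h : Vanishes p F.a F.x (2 ^ J * T) S) : Vanishes p F.a F.x T (M ^ J * S) := by
  induction J generalizing S with
  | zero => simpa using h
  | succ J ih =>
    have := hF.nonneg_left
    have := hF.nonneg_right
    have hM₁ : (1 : ℝ) ≤ M := by exact_mod_cast hM
    have hJ : (1 : ℝ) ≤ 2 ^ J := one_le_pow₀ one_le_two
    rw [pow_succ, mul_assoc]
    refine ih (S := M * S) ?_ (hF.vanishes_of_lt hQ hp (Nat.le_mul_of_pos_left S hM) ?_ ?_)
    · push_cast
      calc (Module.finrank ℚ K + 1) * (Q + T * X + 4 * (M * (M * S)) * Y)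
          ≤ (Module.finrank ℚ K + 1) * (M * (Q + T * X) + 4 * (M * (M * S)) * Y) := by
            gcongr
            exact le_mul_of_one_le_left (by positivity) hM₁
        _ = M * ((Module.finrank ℚ K + 1) * (Q + T * X + 4 * (M * S) * Y)) := by ring
        _ < M * (T * S) := by gcongr
        _ = T * (M * S) := by ring
    · push_cast
      calc (Module.finrank ℚ K + 1) * (Q + 2 ^ J * T * X + 4 * (M * S) * Y)
          = (Module.finrank ℚ K + 1) * (Q + 4 * (M * S) * Y + 2 ^ J * T * X) := by ring
        _ ≤ (Module.finrank ℚ K + 1) * (2 ^ J * (Q + 4 * (M * S) * Y) + 2 ^ J * T * X) := by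
            gcongr
            exact le_mul_of_one_le_left (by positivity) hJ
        _ = 2 ^ J * ((Module.finrank ℚ K + 1) * (Q + T * X + 4 * (M * S) * Y)) := by ring
        _ < 2 ^ J * (T * S) := by gcongr
        _ = 2 ^ J * T * S := by ring
    · rwa [← mul_assoc, ← pow_succ']

end FrequencySystem

/-! ### Zero estimates -/

section ZeroEstimate

variable {R Λ ι : Type*} [CommRing R] [IsDomain R]

theorem sum_fiber_eq_zero_of_sum_mul_pow [Fintype Λ] [DecidableEq R] {c a : Λ → R}
    (h : ∀ s < Fintype.card Λ, ∑ l, c l * a l ^ s = 0) (l₀ : Λ) :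
    ∑ l with a l = a l₀, c l = 0 := by
  classical
  set P : Polynomial R := ∏ v ∈ (univ.image a).erase (a l₀), (Polynomial.X - Polynomial.C v)
    with hP
  have hdeg : P.natDegree < Fintype.card Λ := by
    rw [hP, Polynomial.natDegree_finsetProd_X_sub_C_eq_card]
    exact (card_erase_lt_of_mem (by simp)).trans_le card_image_le
  have hsum : ∑ l, c l * P.eval (a l) = 0 := by
    simp_rw [Polynomial.eval_eq_sum_range' hdeg, mul_sum]
    rw [sum_comm]
    refine sum_eq_zero fun s hs ↦ ?_
    simp_rw [mul_left_comm (c _), ← mul_sum, h s (mem_range.1 hs), mul_zero]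
  have heval (l : Λ) : P.eval (a l) = if a l = a l₀ then P.eval (a l₀) else 0 := by
    split_ifs with hl
    · rw [hl]
    · rw [hP, Polynomial.eval_prod]
      exact prod_eq_zero (i := a l) (by simp [hl]) (by simp)
  have hne : P.eval (a l₀) ≠ 0 := by
    rw [hP, Polynomial.eval_prod, prod_ne_zero_iff]
    intro v hv
    rw [Polynomial.eval_sub, Polynomial.eval_X, Polynomial.eval_C]
    exact sub_ne_zero.2 (ne_of_mem_erase hv).symm
  rw [sum_congr rfl fun l _ ↦ by rw [heval l]] at hsum
  simp only [mul_ite, mul_zero] at hsum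
  rw [← sum_filter, ← sum_mul] at hsum
  exact (mul_eq_zero.1 hsum).resolve_right hne

theorem exists_totalDegree_le_card_eval_eq_zero (s : Finset (ι → R)) {y : ι → R} (hy : y ∉ s) :
    ∃ P : MvPolynomial ι R, P.totalDegree ≤ #s ∧ (∀ z ∈ s, MvPolynomial.eval z P = 0) ∧
      MvPolynomial.eval y P ≠ 0 := by
  classical
  induction s using Finset.induction_on with
  | empty => exact ⟨1, by simp⟩
  | insert z s hz ih =>
    rw [mem_insert, not_or] at hy
    obtain ⟨P, hdeg, hzero, hne⟩ := ih hy.2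
    obtain ⟨i, hi⟩ := Function.ne_iff.1 hy.1
    refine ⟨(MvPolynomial.X i - MvPolynomial.C (z i)) * P, ?_, ?_, ?_⟩
    · rw [card_insert_of_notMem hz, add_comm]
      refine (MvPolynomial.totalDegree_mul _ _).trans (add_le_add ?_ hdeg)
      exact (MvPolynomial.totalDegree_sub_C_le _ _).trans (MvPolynomial.totalDegree_X i).le
    · intro w hw
      rcases mem_insert.1 hw with rfl | hw
      · simp
      · rw [map_mul, hzero w hw, mul_zero]
    · simpa [sub_eq_zero] using ⟨hi, hne⟩

variable [Fintype ι] {x : Λ → ι → R}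

theorem eq_zero_of_sum_mul_prod_pow {s : Finset Λ} {c : Λ → R} {N : ℕ}
    (hx : Function.Injective x) (hs : #s ≤ N)
    (h : ∀ m : ι → ℕ, ∑ i, m i < N → ∑ l ∈ s, c l * ∏ i, x l i ^ m i = 0) {l₀ : Λ}
    (hl₀ : l₀ ∈ s) : c l₀ = 0 := by
  classical
  obtain ⟨P, hdeg, hzero, hne⟩ := exists_totalDegree_le_card_eval_eq_zero
    ((s.erase l₀).image x) (y := x l₀) (by simp [hx.eq_iff])
  have hdeg' : P.totalDegree < N :=
    (hdeg.trans card_image_le).trans_lt ((card_erase_lt_of_mem hl₀).trans_le hs)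
  have key := sum_mul_eval_eq_zero h hdeg'
  rw [sum_eq_single_of_mem l₀ hl₀ fun l hl hll₀ ↦ by
    rw [hzero _ (mem_image_of_mem x (mem_erase.2 ⟨hll₀, hl⟩)), mul_zero]] at key
  exact (mul_eq_zero.1 key).resolve_right hne

theorem Vanishes.eq_zero [Fintype Λ] [DecidableEq R] {p a : Λ → R} {N : ℕ}
    (h : Vanishes p a x N (Fintype.card Λ)) (hx : Function.Injective x)
    (hN : ∀ l₀, #{l | a l = a l₀} ≤ N) : p = 0 :=
  funext fun l₀ ↦ eq_zero_of_sum_mul_prod_pow hx (hN l₀)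
    (fun m hm ↦ sum_fiber_eq_zero_of_sum_mul_pow (h m hm) l₀) (by simp)

end ZeroEstimate

theorem Vanishes.mono {R Λ ι : Type*} [CommSemiring R] [Fintype Λ] [Fintype ι] {p a : Λ → R}
    {x : Λ → ι → R} {T T' S S' : ℕ} (h : Vanishes p a x T S) (hT : T' ≤ T) (hS : S' ≤ S) :
    Vanishes p a x T' S' :=
  fun m hm s hs ↦ h m (hm.trans_le hT) s (hs.trans_le hS)

section IntegerCombinations

variable {V J : Type*} [AddCommGroup V] [Fintype J] {ℓ : J → V} {L : ℕ}

theorem injective_sum_smul_of_linearIndependent (hℓ : LinearIndependent ℤ ℓ) :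
    Function.Injective fun l : J → Fin L ↦ ∑ j, (l j : ℤ) • ℓ j := by
  intro l l' hll'
  have := hℓ.fintypeLinearCombination_injective
    (a₁ := fun j ↦ (l j : ℤ)) (a₂ := fun j ↦ (l' j : ℤ)) hll'
  exact funext fun j ↦ Fin.ext (by exact_mod_cast congrFun this j)

/-- Any two differences of elements of `F` are commensurable, so a coordinate in which two elements
of `F` differ determines the elements of `F`. -/
theorem card_le_of_sub_mem_zmultiples (hℓ : LinearIndependent ℤ ℓ) (hL : 0 < L)
    {F : Finset (J → Fin L)} {w : V} (hF : ∀ l ∈ F, ∀ l' ∈ F,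
      ∑ j, (l j : ℤ) • ℓ j - ∑ j, (l' j : ℤ) • ℓ j ∈ AddSubgroup.zmultiples w) :
    #F ≤ L := by
  rcases le_or_gt #F 1 with hF₁ | hF₁
  · exact hF₁.trans hL
  obtain ⟨l₁, hl₁, l₂, hl₂, hne⟩ := one_lt_card_iff_nontrivial.1 hF₁
  obtain ⟨j, hj⟩ := Function.ne_iff.1 hne
  obtain ⟨z₁, hz₁⟩ := AddSubgroup.mem_zmultiples_iff.1 (hF l₁ hl₁ l₂ hl₂)
  have hinj : Set.InjOn (fun l : J → Fin L ↦ l j) F := by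
    intro l hl l' hl' hll'
    obtain ⟨z, hz⟩ := AddSubgroup.mem_zmultiples_iff.1 (hF l hl l' hl')
    have hcomm : ∑ i, (z₁ * ((l i : ℤ) - l' i) - z * ((l₁ i : ℤ) - l₂ i)) • ℓ i = 0 := by
      simp_rw [sub_smul, mul_smul, sub_smul, sum_sub_distrib, ← smul_sum, sum_sub_distrib]
      rw [← hz, ← hz₁, smul_comm, sub_self]
    have hz₀ : z = 0 := by
      have := Fintype.linearIndependent_iff.1 hℓ _ hcomm j
      rw [show l j = l' j from hll', sub_self, mul_zero, zero_sub, neg_eq_zero] at this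
      exact (mul_eq_zero.1 this).resolve_right
        (sub_ne_zero.2 fun h ↦ hj (Fin.ext (by exact_mod_cast h)))
    rw [hz₀, zero_smul] at hz
    exact injective_sum_smul_of_linearIndependent hℓ (sub_eq_zero.1 hz.symm)
  simpa using card_le_card_of_injOn _ (fun _ _ ↦ mem_univ _) hinj

end IntegerCombinations

/-! ### Baker's theorem -/

namespace FrequencySystem

variable {K : Type*} [Field K] [NumberField K] {φ : K →+* ℂ} {ι : Type*} [Fintype ι]

theorem Bounded.mono {Λ : Type*} {F : FrequencySystem φ Λ ι} {X X' Y Y' : ℝ} (hF : F.Bounded X Y)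
    (hX : X ≤ X') (hY : Y ≤ Y') : F.Bounded X' Y' where
  nonneg_left := hF.nonneg_left.trans hX
  nonneg_right := hF.nonneg_right.trans hY
  norm_x_le σ l i := (hF.norm_x_le σ l i).trans (Real.exp_le_exp.2 hX)
  norm_a_le σ l := (hF.norm_a_le σ l).trans (Real.exp_le_exp.2 hY)
  norm_freq_le l := (hF.norm_freq_le l).trans hY

theorem Bounded.house_coeff_le {Λ : Type*} {F : FrequencySystem φ Λ ι} {X Y : ℝ}
    (hF : F.Bounded X Y) {T S s : ℕ} {m : ι → ℕ} (hm : ∀ i, m i ≤ T) (hs : s ≤ S) (l : Λ) :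
    house (((∏ i, F.x l i ^ m i) * F.a l ^ s : 𝓞 K) : K) ≤
      Real.exp (Fintype.card ι * T * X + S * Y) := by
  refine house_le_of_forall_norm_le fun σ ↦ ?_
  simp only [map_mul, map_prod, map_pow, norm_mul, norm_prod, norm_pow]
  have hx (i : ι) : ‖σ (F.x l i)‖ ^ m i ≤ Real.exp X ^ T :=
    (pow_le_pow_left₀ (norm_nonneg _) (hF.norm_x_le σ l i) _).trans
      (pow_le_pow_right₀ (Real.one_le_exp hF.nonneg_left) (hm i))
  have ha : ‖σ (F.a l)‖ ^ s ≤ Real.exp Y ^ S :=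
    (pow_le_pow_left₀ (norm_nonneg _) (hF.norm_a_le σ l) _).trans
      (pow_le_pow_right₀ (Real.one_le_exp hF.nonneg_right) hs)
  calc (∏ i, ‖σ (F.x l i)‖ ^ m i) * ‖σ (F.a l)‖ ^ s
      ≤ (∏ _i : ι, Real.exp X ^ T) * Real.exp Y ^ S := by gcongr; exact hx _
    _ = Real.exp (Fintype.card ι * T * X + S * Y) := by
        rw [prod_const, card_univ, ← pow_mul', ← Real.exp_nat_mul, ← Real.exp_nat_mul,
          ← Real.exp_add, Nat.cast_mul]

theorem exists_vanishes_const (φ : K →+* ℂ) : ∃ C : ℝ, 0 ≤ C ∧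
    ∀ (Λ ι : Type*) [Fintype Λ] [Fintype ι] (F : FrequencySystem φ Λ ι) (X Y : ℝ),
      F.Bounded X Y → ∀ T S : ℕ, 0 < T → 0 < S → 2 * (T ^ Fintype.card ι * S) ≤ Fintype.card Λ →
      ∃ p : Λ → 𝓞 K, p ≠ 0 ∧ Vanishes p F.a F.x T S ∧ ∀ σ : K →+* ℂ, ∑ l, ‖σ (p l)‖ ≤
        Real.exp (C + 2 * Real.log (Fintype.card Λ) + Fintype.card ι * T * X + S * Y) := by
  classical
  obtain ⟨C, hC₁, hC⟩ := exists_siegel_const K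
  refine ⟨2 * Real.log C, mul_nonneg zero_le_two (Real.log_nonneg hC₁),
    fun Λ ι _ _ F X Y hF T S hT hS hcard ↦ ?_⟩
  have : NeZero T := ⟨hT.ne'⟩
  have : NeZero S := ⟨hS.ne'⟩
  have := hF.nonneg_left
  have := hF.nonneg_right
  set A : ℝ := Real.exp (Fintype.card ι * T * X + S * Y) with hA
  obtain ⟨p, hp, hker, hhouse⟩ := hC ((ι → Fin T) × Fin S) Λ
    (fun e l ↦ (∏ i, F.x l i ^ (e.1 i : ℕ)) * F.a l ^ (e.2 : ℕ)) A
    (Real.one_le_exp (by positivity)) (by simpa using hcard)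
    fun e l ↦ hF.house_coeff_le (fun i ↦ (e.1 i).2.le) e.2.2.le l
  refine ⟨p, hp, fun m hm s hs ↦ ?_, fun σ ↦ ?_⟩
  · have hmT (i : ι) : m i < T := (single_le_sum (fun _ _ ↦ Nat.zero_le _) (mem_univ i)).trans_lt hm
    rw [← hker (fun i ↦ ⟨m i, hmT i⟩, ⟨s, hs⟩)]
    exact sum_congr rfl fun l _ ↦ by ring
  · have hΛ : (0 : ℝ) < Fintype.card Λ := by
      exact_mod_cast (show 0 < 2 * (T ^ Fintype.card ι * S) by positivity).trans_le hcard
    calc ∑ l, ‖σ (p l)‖ ≤ ∑ _l : Λ, C * (C * Fintype.card Λ * A) :=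
          sum_le_sum fun l _ ↦ (norm_embedding_le_house _ σ).trans (hhouse l)
      _ = C ^ 2 * (Fintype.card Λ : ℝ) ^ 2 * A := by rw [sum_const, card_univ, nsmul_eq_mul]; ring
      _ = _ := by
          rw [add_assoc (_ + _), Real.exp_add, Real.exp_add, ← hA, mul_comm 2, mul_comm 2,
            Real.exp_mul, Real.exp_mul, Real.exp_log (by linarith), Real.exp_log hΛ]
          norm_cast

end FrequencySystem

/-- Logarithms `ℓ j` of algebraic integers `α j`, related by `b * ℓ none = ∑ i, β i * ℓ (some i)`
with `b ≠ 0`: a linear dependence over the number field, solved for one of the logarithms. -/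
structure LogRelation {K : Type*} [Field K] [NumberField K] (φ : K →+* ℂ) (ι : Type*)
    [Fintype ι] where
  α : Option ι → 𝓞 K
  ℓ : Option ι → ℂ
  b : ℤ
  β : ι → 𝓞 K
  exp_ℓ : ∀ j, Complex.exp (ℓ j) = φ (α j)
  b_ne_zero : b ≠ 0
  b_mul_ℓ : b * ℓ none = ∑ i, φ (β i) * ℓ (some i)

theorem log_natCast_pow_le (M n : ℕ) : Real.log (M ^ n : ℕ) ≤ n * M := by
  rw [Nat.cast_pow, Real.log_pow]
  gcongr
  exact Real.log_le_self M.cast_nonneg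

namespace LogRelation

variable {K : Type*} [Field K] [NumberField K] {φ : K →+* ℂ} {ι : Type*} [Fintype ι]
  (D : LogRelation φ ι) (L : ℕ)

theorem sum_mul_div_eq (l : Option ι → Fin L) :
    ∑ i, φ (D.b * (l (some i) : ℕ) + (l none : ℕ) * D.β i : 𝓞 K) * (D.ℓ (some i) / D.b) =
      ∑ j, (l j : ℤ) • D.ℓ j := by
  have hb : (D.b : ℂ) ≠ 0 := by exact_mod_cast D.b_ne_zero
  have hterm (i : ι) :
      φ (D.b * (l (some i) : ℕ) + (l none : ℕ) * D.β i : 𝓞 K) * (D.ℓ (some i) / D.b) =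
        (l (some i) : ℤ) • D.ℓ (some i) +
          ((l none : ℕ) : ℂ) / D.b * (φ (D.β i) * D.ℓ (some i)) := by
    simp only [map_add, map_mul, map_intCast, map_natCast, zsmul_eq_mul, Int.cast_natCast]
    field_simp
  simp_rw [hterm]
  rw [sum_add_distrib, ← mul_sum, ← D.b_mul_ℓ, Fintype.sum_option, add_comm, zsmul_eq_mul,
    Int.cast_natCast]
  congr 1
  field_simp

/-- The frequencies `∑ j, l j * ℓ j` with `0 ≤ l j < L`, with `ℓ none` eliminated. -/
noncomputable def frequencySystem : FrequencySystem φ (Option ι → Fin L) ι where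
  x l i := D.b * (l (some i) : ℕ) + (l none : ℕ) * D.β i
  a l := ∏ j, D.α j ^ (l j : ℕ)
  u i := D.ℓ (some i) / D.b
  exp_sum l := by
    rw [sum_mul_div_eq, Complex.exp_sum]
    simp only [zsmul_eq_mul, Int.cast_natCast, Complex.exp_nat_mul, D.exp_ℓ, map_prod, map_pow]

variable {L}

theorem freq_frequencySystem (l : Option ι → Fin L) :
    (D.frequencySystem L).freq l = ∑ j, (l j : ℤ) • D.ℓ j :=
  D.sum_mul_div_eq L l

theorem norm_x_frequencySystem_le (σ : K →+* ℂ) (l : Option ι → Fin L) (i : ι) :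
    ‖σ ((D.frequencySystem L).x l i)‖ ≤ (|(D.b : ℝ)| + ∑ i, house (D.β i : K)) * L := by
  have hβ : ‖σ (D.β i)‖ ≤ ∑ i, house (D.β i : K) := (norm_embedding_le_house _ σ).trans
    (single_le_sum (f := fun i ↦ house (D.β i : K)) (fun _ _ ↦ house_nonneg _) (mem_univ i))
  simp only [frequencySystem, map_add, map_mul, map_intCast, map_natCast]
  calc _ ≤ |(D.b : ℝ)| * (l (some i) : ℕ) + (l none : ℕ) * ‖σ (D.β i)‖ := by
        refine (norm_add_le _ _).trans_eq ?_
        rw [norm_mul, norm_mul, Complex.norm_intCast, Complex.norm_natCast, Complex.norm_natCast]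
    _ ≤ |(D.b : ℝ)| * L + L * ∑ i, house (D.β i : K) := by
        gcongr
        exacts [(l _).2.le, (l _).2.le]
    _ = _ := by ring

theorem norm_a_frequencySystem_le (σ : K →+* ℂ) (l : Option ι → Fin L) :
    ‖σ ((D.frequencySystem L).a l)‖ ≤
      Real.exp (Fintype.card (Option ι) * (∑ j, house (D.α j : K)) * L) := by
  have hα (j : Option ι) : ‖σ (D.α j)‖ ^ (l j : ℕ) ≤ Real.exp (∑ j, house (D.α j : K)) ^ L := by
    have hnorm : ‖σ (D.α j)‖ ≤ Real.exp (∑ j, house (D.α j : K)) :=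
      ((norm_embedding_le_house _ σ).trans (single_le_sum (f := fun j ↦ house (D.α j : K))
        (fun _ _ ↦ house_nonneg _) (mem_univ j))).trans
        ((le_add_of_nonneg_right zero_le_one).trans (Real.add_one_le_exp _))
    exact (pow_le_pow_left₀ (norm_nonneg _) hnorm _).trans
      (pow_le_pow_right₀ (Real.one_le_exp (sum_nonneg fun _ _ ↦ house_nonneg _)) (l j).2.le)
  simp only [frequencySystem, map_prod, map_pow, norm_prod, norm_pow]
  calc ∏ j, ‖σ (D.α j)‖ ^ (l j : ℕ)
      ≤ ∏ _j : Option ι, Real.exp (∑ j, house (D.α j : K)) ^ L := by gcongr; exact hα _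
    _ = _ := by
        rw [prod_const, card_univ, ← Real.exp_nat_mul, ← Real.exp_nat_mul]
        ring_nf

theorem norm_freq_frequencySystem_le (l : Option ι → Fin L) :
    ‖(D.frequencySystem L).freq l‖ ≤ (∑ j, ‖D.ℓ j‖) * L := by
  rw [freq_frequencySystem, sum_mul]
  refine norm_sum_le_of_le _ fun j _ ↦ ?_
  rw [zsmul_eq_mul, norm_mul, Int.cast_natCast, Complex.norm_natCast, mul_comm]
  gcongr
  exact (l j).2.le

theorem exists_bounded_frequencySystem : ∃ c : ℝ, 0 ≤ c ∧
    ∀ L : ℕ, 0 < L → (D.frequencySystem L).Bounded (c + Real.log L) (c * L) := by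
  set cβ : ℝ := |(D.b : ℝ)| + ∑ i, house (D.β i : K)
  set cα : ℝ := Fintype.card (Option ι) * ∑ j, house (D.α j : K)
  set cℓ : ℝ := ∑ j, ‖D.ℓ j‖
  have hβ : 0 ≤ cβ := add_nonneg (abs_nonneg _) (sum_nonneg fun _ _ ↦ house_nonneg _)
  have hα : 0 ≤ cα := mul_nonneg (Nat.cast_nonneg _) (sum_nonneg fun _ _ ↦ house_nonneg _)
  have hℓ : 0 ≤ cℓ := sum_nonneg fun _ _ ↦ norm_nonneg _
  refine ⟨cβ + cα + cℓ, by positivity, fun L hL ↦ ⟨?_, by positivity, fun σ l i ↦ ?_,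
    fun σ l ↦ ?_, fun l ↦ ?_⟩⟩
  · exact add_nonneg (by positivity) (Real.log_natCast_nonneg L)
  · rw [Real.exp_add, Real.exp_log (by exact_mod_cast hL)]
    refine (D.norm_x_frequencySystem_le σ l i).trans ?_
    gcongr
    linarith [Real.add_one_le_exp (cβ + cα + cℓ)]
  · refine (D.norm_a_frequencySystem_le σ l).trans ?_
    gcongr
    linarith
  · refine (D.norm_freq_frequencySystem_le l).trans ?_
    gcongr
    linarith

theorem exists_bounded_frequencySystem_pow : ∃ c : ℝ, 0 ≤ c ∧ ∀ M n : ℕ, 0 < M →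
    (D.frequencySystem (M ^ n)).Bounded ((c + n) * M) (c * (M ^ n : ℕ)) := by
  obtain ⟨c, hc₀, hc⟩ := D.exists_bounded_frequencySystem
  refine ⟨c, hc₀, fun M n hM ↦ (hc (M ^ n) (Nat.pow_pos hM)).mono ?_ le_rfl⟩
  have hM' : (1 : ℝ) ≤ M := by exact_mod_cast hM
  linarith [log_natCast_pow_le M n, le_mul_of_one_le_right hc₀ hM']

theorem injective_x_frequencySystem (hℓ : LinearIndependent ℤ D.ℓ) :
    Function.Injective (D.frequencySystem L).x := fun l l' h ↦
  injective_sum_smul_of_linearIndependent hℓ <| by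
    simp only [← freq_frequencySystem, FrequencySystem.freq, h]

open scoped Classical in
theorem card_filter_a_frequencySystem_le (hℓ : LinearIndependent ℤ D.ℓ) (hL : 0 < L)
    (l₀ : Option ι → Fin L) :
    #{l | (D.frequencySystem L).a l = (D.frequencySystem L).a l₀} ≤ L := by
  refine card_le_of_sub_mem_zmultiples (w := 2 * Real.pi * Complex.I) hℓ hL fun l hl l' hl' ↦ ?_
  simp only [mem_filter_univ] at hl hl'
  have hexp : Complex.exp ((D.frequencySystem L).freq l) =
      Complex.exp ((D.frequencySystem L).freq l') := by
    simp only [FrequencySystem.freq, FrequencySystem.exp_sum, hl, hl']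
  obtain ⟨z, hz⟩ := Complex.exp_eq_exp_iff_exists_int.1 hexp
  rw [freq_frequencySystem, freq_frequencySystem] at hz
  exact AddSubgroup.mem_zmultiples_iff.2 ⟨z, by rw [hz, zsmul_eq_mul, add_sub_cancel_left]⟩

end LogRelation

theorem two_mul_pow_mul_le_pow {M J k : ℕ} (hM : 2 ^ (J * k + 1) ≤ M) :
    2 * ((2 ^ J * (M ^ (4 * (k + 1)) * M ^ 2)) ^ k * M ^ (2 * (k + 1))) ≤
      (M ^ (4 * (k + 1))) ^ (k + 1) := by
  have hM₁ : 0 < M := (Nat.two_pow_pos _).trans_le hM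
  calc 2 * ((2 ^ J * (M ^ (4 * (k + 1)) * M ^ 2)) ^ k * M ^ (2 * (k + 1)))
      = 2 ^ (J * k + 1) * M ^ (4 * (k + 1) * k + 2 * k + 2 * (k + 1)) := by ring
    _ ≤ M * M ^ (4 * (k + 1) * k + 2 * k + 2 * (k + 1)) := by gcongr
    _ ≤ M * M ^ (4 * (k + 1) * k + 2 * k + 2 * (k + 1)) * M := Nat.le_mul_of_pos_right _ hM₁
    _ = (M ^ (4 * (k + 1))) ^ (k + 1) := by ring

theorem mul_auxiliary_bound_lt {d A G M L S n k : ℝ} (hd : 0 ≤ d) (hA : 0 ≤ A) (hG : 0 ≤ G)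
    (hn : 0 ≤ n) (hk : 0 ≤ k) (hM : 1 ≤ M) (hL : 1 ≤ L) (hS : M ^ 2 ≤ S)
    (hlt : (d + 1) * (A * (7 + 2 * n + k * G)) < M) :
    (d + 1) * ((A + 2 * (n * (A * M)) + k * (G * (L * M ^ 2)) * (A * M) + S * (A * L)) +
      L * M ^ 2 * (A * M) + 4 * (M * S) * (A * L)) < L * M ^ 2 * S := by
  have hS₁ : 1 ≤ S := (one_le_pow₀ hM).trans hS
  set U : ℝ := L * M * S
  have hMU : M ≤ U := by
    calc M = 1 * M * 1 := by ring
      _ ≤ L * M * S := by gcongr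
  have hcubeU : L * M ^ 3 ≤ U := by
    calc L * M ^ 3 = L * M * M ^ 2 := by ring
      _ ≤ L * M * S := by gcongr
  have hSU : S * L ≤ U := by
    calc S * L = L * 1 * S := by ring
      _ ≤ L * M * S := by gcongr
  have : 0 < U := by linarith
  calc _ = (d + 1) * (A * (1 + 2 * n * M + k * G * (L * M ^ 3) + S * L + L * M ^ 3 + 4 * U)) := by
        ring
    _ ≤ (d + 1) * (A * (U + 2 * n * U + k * G * U + U + U + 4 * U)) := by
        gcongr
        exact hM.trans hMU
    _ = (d + 1) * (A * (7 + 2 * n + k * G)) * U := by ring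
    _ < M * U := by gcongr
    _ = L * M ^ 2 * S := by ring

namespace LogRelation

variable {K : Type*} [Field K] [NumberField K] {φ : K →+* ℂ} {ι : Type*} [Fintype ι]
  (D : LogRelation φ ι)

/- With `k = card ι`, a large `M` and `L = M ^ (4 * (k + 1))` there are `L ^ (k + 1) = M ^ J`
frequencies. Siegel's lemma provides zeros of multiplicity `2 ^ J * L * M ^ 2` at
`M ^ (2 * (k + 1))` points, and `J` extrapolation steps leave multiplicity `L * M ^ 2 ≥ L` at
`M ^ J * M ^ (2 * (k + 1)) ≥ M ^ J` points. -/
open scoped Classical in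
theorem exists_vanishes_frequencySystem : ∃ L : ℕ, 0 < L ∧
    ∃ p : (Option ι → Fin L) → 𝓞 K, p ≠ 0 ∧ Vanishes p (D.frequencySystem L).a
      (D.frequencySystem L).x L (Fintype.card (Option ι → Fin L)) := by
  obtain ⟨c, hc₀, hc⟩ := D.exists_bounded_frequencySystem_pow
  obtain ⟨C, hC₀, hC⟩ := FrequencySystem.exists_vanishes_const φ
  set k := Fintype.card ι
  set J := 4 * (k + 1) ^ 2 with hJ
  set A : ℝ := c + C + 4 * (k + 1) with hA
  obtain ⟨M, hM⟩ := exists_nat_gt (max (2 ^ (J * k + 1))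
    ((Module.finrank ℚ K + 1) * (A * (7 + 2 * (k + 1) + k * 2 ^ J))))
  have hM₂ : 2 ^ (J * k + 1) ≤ M := by exact_mod_cast ((le_max_left _ _).trans_lt hM).le
  have hM₁ : 1 ≤ M := Nat.one_le_two_pow.trans hM₂
  have hM₁' : (1 : ℝ) ≤ M := by exact_mod_cast hM₁
  set L := M ^ (4 * (k + 1)) with hL
  set S := M ^ (2 * (k + 1))
  have hL₁ : 1 ≤ L := Nat.one_le_pow _ _ hM₁
  have hS₂ : M ^ 2 ≤ S := Nat.pow_le_pow_right hM₁ (by lia)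
  have hcard : Fintype.card (Option ι → Fin L) = L ^ (k + 1) := by
    rw [Fintype.card_fun, Fintype.card_option, Fintype.card_fin]
  have hF : (D.frequencySystem L).Bounded (A * M) (A * L) :=
    (hc M (4 * (k + 1)) hM₁).mono (by rw [hA]; push_cast; gcongr; linarith)
      (by gcongr; rw [hA]; linarith)
  obtain ⟨p, hp, hvanishes, hnorm⟩ := hC _ _ _ _ _ hF (2 ^ J * (L * M ^ 2)) S (by positivity)
    (by positivity) (hcard ▸ two_mul_pow_mul_le_pow hM₂)
  have hlog : Real.log (Fintype.card (Option ι → Fin L)) ≤ (k + 1) * (A * M) := by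
    rw [hcard, hL, ← pow_mul]
    refine (log_natCast_pow_le M _).trans ?_
    push_cast
    rw [mul_comm (4 * _), mul_assoc]
    gcongr
    linarith
  have hfinal := hF.vanishes_pow_mul (Q := A + 2 * ((k + 1) * (A * M)) +
      k * (2 ^ J * (L * M ^ 2)) * (A * M) + S * (A * L)) (by positivity)
    (fun σ ↦ (hnorm σ).trans (by push_cast; gcongr; linarith)) hM₁ (by
      push_cast
      exact mul_auxiliary_bound_lt (by positivity) (by positivity) (by positivity) (by positivity)
        (by positivity) hM₁' (by exact_mod_cast hL₁) (by exact_mod_cast hS₂)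
        ((le_max_right _ _).trans_lt hM)) J hvanishes
  refine ⟨L, hL₁, p, hp, hfinal.mono (Nat.le_mul_of_pos_right _ (by positivity)) ?_⟩
  calc Fintype.card (Option ι → Fin L) = M ^ J := by rw [hcard, hL, hJ, ← pow_mul]; ring_nf
    _ ≤ M ^ J * S := Nat.le_mul_of_pos_right _ (by positivity)

theorem not_linearIndependent : ¬ LinearIndependent ℤ D.ℓ := by
  classical
  intro hℓ
  obtain ⟨L, hL, p, hp, hvanishes⟩ := D.exists_vanishes_frequencySystem
  exact hp (hvanishes.eq_zero (D.injective_x_frequencySystem hℓ)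
    (D.card_filter_a_frequencySystem_le hℓ hL))

end LogRelation

section Baker

variable {K : Type*} [Field K] [NumberField K] {J : Type*} [Fintype J]

theorem exists_logRelation [DecidableEq J] (φ : K →+* ℂ) {ℓ : J → ℂ} {α : J → 𝓞 K}
    (hα : ∀ j, Complex.exp (ℓ j) = φ (α j)) {c : J → K} (h : ∑ j, φ (c j) * ℓ j = 0) {j₀ : J}
    (hc : c j₀ ≠ 0) :
    ∃ D : LogRelation φ {j // j ≠ j₀}, D.ℓ = ℓ ∘ Equiv.optionSubtypeNe j₀ := by
  have : DecidableEq K := Classical.decEq K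
  obtain ⟨b, hb, hint⟩ := exists_integral_multiples ℤ ℚ
    (univ.image fun i : {j // j ≠ j₀} ↦ -c i / c j₀)
  have hφ : φ (c j₀) ≠ 0 := by simpa using hc
  refine ⟨⟨fun o ↦ α (Equiv.optionSubtypeNe j₀ o), _, b,
    fun i ↦ ⟨b • (-c i / c j₀), hint _ (mem_image_of_mem _ (mem_univ i))⟩, fun o ↦ hα _, hb, ?_⟩,
    rfl⟩
  rw [Fintype.sum_eq_add_sum_subtype_ne _ j₀] at h
  have hsolve : ℓ j₀ = ∑ i : {j // j ≠ j₀}, -φ (c i) / φ (c j₀) * ℓ i := by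
    simp only [neg_div, neg_mul, div_mul_eq_mul_div, sum_neg_distrib, ← sum_div]
    rw [eq_neg_iff_add_eq_zero, ← mul_right_inj' hφ, mul_zero, ← h]
    field_simp
  simp only [Equiv.optionSubtypeNe_none, Equiv.optionSubtypeNe_some, hsolve, mul_sum]
  refine sum_congr rfl fun i _ ↦ ?_
  change _ = φ (b • (-c i / c j₀)) * ℓ i
  simp only [zsmul_eq_mul, map_mul, map_div₀, map_neg, map_intCast, mul_assoc]

theorem eq_zero_of_linearIndependent_log (φ : K →+* ℂ) {ℓ : J → ℂ} {α : J → 𝓞 K}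
    (hα : ∀ j, Complex.exp (ℓ j) = φ (α j)) (hℓ : LinearIndependent ℚ ℓ) {c : J → K}
    (h : ∑ j, φ (c j) * ℓ j = 0) : c = 0 := by
  classical
  by_contra! hc
  obtain ⟨j₀, hj₀⟩ := Function.ne_iff.1 hc
  obtain ⟨D, hD⟩ := exists_logRelation φ hα h hj₀
  refine D.not_linearIndependent (hD ▸ (hℓ.restrict_scalars' ℤ).comp _
    (Equiv.injective _))

theorem sum_map_mul_log_eq_zero (φ ψ : K →+* ℂ) {ℓ : J → ℂ} {α : J → 𝓞 K}
    (hα : ∀ j, Complex.exp (ℓ j) = φ (α j)) {c : J → K} (h : ∑ j, φ (c j) * ℓ j = 0) :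
    ∑ j, ψ (c j) * ℓ j = 0 := by
  obtain ⟨κ, e, he, hspan, hindep⟩ := exists_linearIndependent' ℚ ℓ
  have : Fintype κ := Fintype.ofInjective e he
  have hcoord (j : J) : ∃ r : κ → ℚ, ∑ i, r i • ℓ (e i) = ℓ j :=
    (Submodule.mem_span_range_iff_exists_fun ℚ).1
      (hspan ▸ Submodule.subset_span (Set.mem_range_self j))
  choose r hr using hcoord
  have hexpand (θ : K →+* ℂ) :
      ∑ j, θ (c j) * ℓ j = ∑ i, θ (∑ j, c j * (r j i : K)) * ℓ (e i) := by
    simp only [map_sum, map_mul, map_ratCast, sum_mul, mul_assoc]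
    rw [sum_comm]
    refine sum_congr rfl fun j _ ↦ ?_
    rw [← mul_sum, ← hr j]
    simp only [Rat.smul_def]
  have hzero := eq_zero_of_linearIndependent_log φ (fun i ↦ hα (e i)) hindep
    ((hexpand φ).symm.trans h)
  simp [hexpand ψ, funext_iff.1 hzero]

end Baker

/-! ### Dirichlet series at the edge of convergence -/

theorem abs_rpow_neg_sub_rpow_neg_le {i : ℕ} (hi : 1 ≤ i) {s : ℝ} (hs₁ : 1 ≤ s) (hs₂ : s ≤ 2) :
    |((i + 1 : ℕ) : ℝ) ^ (-s) - (i : ℝ) ^ (-s)| ≤ 2 / (i : ℝ) ^ 2 := by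
  have hi₁ : (1 : ℝ) ≤ i := by exact_mod_cast hi
  have hi₀ : (0 : ℝ) < i := by linarith
  push_cast
  have hfactor : ((i : ℝ) + 1) ^ (-s) = (i : ℝ) ^ (-s) * (1 + -1 / (i + 1)) ^ s := by
    rw [show 1 + -1 / ((i : ℝ) + 1) = i / (i + 1) by field_simp; ring,
      Real.div_rpow hi₀.le (by linarith), Real.rpow_neg hi₀.le, Real.rpow_neg (by linarith)]
    field_simp
  have hbernoulli : 1 - 2 / (i : ℝ) ≤ (1 + -1 / (i + 1)) ^ s := by
    refine le_trans ?_ (one_add_mul_self_le_rpow_one_add ?_ hs₁)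
    · rw [mul_div_assoc', mul_neg_one, neg_div, ← sub_eq_add_neg]
      gcongr
      linarith
    · rw [neg_div]
      exact neg_le_neg ((div_le_one (by linarith)).2 (by linarith))
  have hdecay : (i : ℝ) ^ (-s) ≤ (i : ℝ)⁻¹ := by
    rw [← Real.rpow_neg_one]
    exact Real.rpow_le_rpow_of_exponent_le hi₁ (by linarith)
  have hanti : ((i : ℝ) + 1) ^ (-s) ≤ (i : ℝ) ^ (-s) :=
    Real.rpow_le_rpow_of_nonpos hi₀ (by linarith) (by linarith)
  rw [abs_sub_comm, abs_of_nonneg (by linarith), hfactor]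
  calc (i : ℝ) ^ (-s) - (i : ℝ) ^ (-s) * (1 + -1 / (i + 1)) ^ s
      = (i : ℝ) ^ (-s) * (1 - (1 + -1 / (i + 1)) ^ s) := by ring
    _ ≤ (i : ℝ)⁻¹ * (2 / i) := by
        refine (mul_le_mul_of_nonneg_left (b := 1 - _) (c := 2 / (i : ℝ)) ?_ ?_).trans ?_
        · linarith
        · positivity
        · gcongr
    _ = 2 / (i : ℝ) ^ 2 := by field_simp

/-- The terms of the series obtained from `∑ a n * n ^ (-s)` by summation by parts. -/
noncomputable def abelTerm (a : ℕ → ℂ) (s : ℝ) (i : ℕ) : ℂ :=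
  (((i + 1 : ℕ) : ℝ) ^ (-s) - (i : ℝ) ^ (-s) : ℝ) * ∑ k ∈ range (i + 1), a k

section AbelSummation

variable {a : ℕ → ℂ} {C : ℝ}

theorem norm_abelTerm_le (ha : a 0 = 0) (hC : ∀ n, ‖∑ k ∈ range n, a k‖ ≤ C) {s : ℝ} (hs₁ : 1 ≤ s)
    (hs₂ : s ≤ 2) (i : ℕ) : ‖abelTerm a s i‖ ≤ 2 / (i : ℝ) ^ 2 * C := by
  rcases Nat.eq_zero_or_pos i with rfl | hi
  · simp [abelTerm, ha]
  · rw [abelTerm, norm_mul, Complex.norm_real]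
    gcongr
    exacts [abs_rpow_neg_sub_rpow_neg_le hi hs₁ hs₂, hC _]

theorem summable_two_div_sq_mul (C : ℝ) : Summable fun i : ℕ ↦ 2 / (i : ℝ) ^ 2 * C := by
  simpa only [mul_one_div] using
    (((Real.summable_one_div_nat_pow (p := 2)).2 one_lt_two).mul_left 2).mul_right C

theorem tendsto_sum_rpow_neg_mul (ha : a 0 = 0) (hC : ∀ n, ‖∑ k ∈ range n, a k‖ ≤ C) {s : ℝ}
    (hs₁ : 1 ≤ s) (hs₂ : s ≤ 2) :
    Tendsto (fun N ↦ ∑ n ∈ range N, ((n : ℝ) ^ (-s) : ℝ) * a n) atTop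
      (𝓝 (-∑' i, abelTerm a s i)) := by
  have hsummable : Summable (abelTerm a s) :=
    .of_norm_bounded (summable_two_div_sq_mul C) (norm_abelTerm_le ha hC hs₁ hs₂)
  have hparts (N : ℕ) : ∑ n ∈ range (N + 1), (((n : ℝ) ^ (-s) : ℝ) : ℂ) * a n =
      ((N : ℝ) ^ (-s) : ℝ) * ∑ k ∈ range (N + 1), a k - ∑ i ∈ range N, abelTerm a s i := by
    simpa [abelTerm] using sum_range_by_parts (fun n : ℕ ↦ (((n : ℝ) ^ (-s) : ℝ) : ℂ)) a (N + 1)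
  have hweight : Tendsto (fun N : ℕ ↦ (N : ℝ) ^ (-s)) atTop (𝓝 0) :=
    (tendsto_rpow_neg_atTop (by linarith)).comp tendsto_natCast_atTop_atTop
  rw [← tendsto_add_atTop_iff_nat 1, ← zero_sub (∑' i, _)]
  refine Tendsto.congr (fun N ↦ (hparts N).symm) (Tendsto.sub ?_ hsummable.hasSum.tendsto_sum_nat)
  refine squeeze_zero_norm (a := fun N : ℕ ↦ (N : ℝ) ^ (-s) * C) (fun N ↦ ?_) ?_
  · rw [norm_mul, Complex.norm_real, Real.norm_of_nonneg (by positivity)]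
    gcongr
    exact hC _
  · simpa using hweight.mul_const C

theorem tendsto_tsum_abelTerm (ha : a 0 = 0) (hC : ∀ n, ‖∑ k ∈ range n, a k‖ ≤ C) :
    Tendsto (fun s ↦ ∑' i, abelTerm a s i) (𝓝[>] 1) (𝓝 (∑' i, abelTerm a 1 i)) := by
  refine tendsto_tsum_of_dominated_convergence (summable_two_div_sq_mul C) (fun i ↦ ?_) ?_
  · have hweight (n : ℕ) : Tendsto (fun s : ℝ ↦ (n : ℝ) ^ (-s)) (𝓝[>] 1) (𝓝 ((n : ℝ) ^ (-1 : ℝ))) :=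
      ((Real.continuousAt_const_rpow' (by norm_num)).tendsto.comp
        (continuous_neg.tendsto (1 : ℝ))).mono_left nhdsWithin_le_nhds
    exact ((Complex.continuous_ofReal.tendsto _).comp
      ((hweight (i + 1)).sub (hweight i))).mul_const _
  · filter_upwards [Ioo_mem_nhdsGT one_lt_two] with s hs i
    exact norm_abelTerm_le ha hC hs.1.le hs.2.le i

theorem LSeriesSummable_of_norm_sum_le (hC : ∀ n, ‖∑ k ∈ range n, a k‖ ≤ C) {s : ℝ} (hs : 1 < s) :
    LSeriesSummable a s := by
  refine LSeriesSummable_of_bounded_of_one_lt_real (m := C + C) (fun n _ ↦ ?_) hs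
  rw [← sum_range_succ_sub_sum a]
  exact (norm_sub_le _ _).trans (add_le_add (hC _) (hC _))

theorem exists_tendsto_LSeries_nhdsGT_one (ha : a 0 = 0)
    (hC : ∀ n, ‖∑ k ∈ range n, a k‖ ≤ C) :
    ∃ l, Tendsto (fun N ↦ ∑ n ∈ range N, a n / n) atTop (𝓝 l) ∧
      Tendsto (fun s : ℝ ↦ LSeries a s) (𝓝[>] 1) (𝓝 l) := by
  refine ⟨-∑' i, abelTerm a 1 i, ?_, (tendsto_tsum_abelTerm ha hC).neg.congr' ?_⟩
  · refine (tendsto_sum_rpow_neg_mul ha hC le_rfl one_le_two).congr fun N ↦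
      sum_congr rfl fun n _ ↦ ?_
    rw [Real.rpow_neg_one, Complex.ofReal_inv, Complex.ofReal_natCast, div_eq_inv_mul]
  · filter_upwards [Ioo_mem_nhdsGT one_lt_two] with s hs
    refine tendsto_nhds_unique (tendsto_sum_rpow_neg_mul ha hC hs.1.le hs.2.le) ?_
    refine (LSeriesSummable_of_norm_sum_le hC hs.1).LSeriesHasSum.tendsto_sum_nat.congr fun N ↦
      sum_congr rfl fun n _ ↦ ?_
    rcases eq_or_ne n 0 with rfl | hn
    · simp [ha]
    · rw [LSeries.term_of_ne_zero hn, Real.rpow_neg n.cast_nonneg, Complex.ofReal_inv,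
        Complex.ofReal_cpow n.cast_nonneg, div_eq_inv_mul, Complex.ofReal_natCast]

end AbelSummation

section PeriodicSeries

open ZMod

variable {q : ℕ} [NeZero q]

theorem sum_range_eq_sum_zmod {M : Type*} [AddCommMonoid M] (g : ZMod q → M) :
    ∑ k ∈ range q, g k = ∑ a, g a :=
  sum_nbij' (fun k ↦ (k : ZMod q)) ZMod.val (by simp) (fun a _ ↦ mem_range.2 a.val_lt)
    (fun k hk ↦ val_cast_of_lt (mem_range.1 hk)) (by simp) (by simp)

theorem exists_norm_sum_range_le {E : Type*} [SeminormedAddCommGroup E] {g : ZMod q → E}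
    (hg : ∑ a, g a = 0) : ∃ C : ℝ, ∀ n : ℕ, ‖∑ k ∈ range n, g k‖ ≤ C := by
  have hper : Function.Periodic (fun n : ℕ ↦ ∑ k ∈ range n, g k) q := by
    intro n
    simp only [add_comm n, sum_range_add, sum_range_eq_sum_zmod, hg, zero_add, Nat.cast_add,
      CharP.cast_eq_zero]
  refine ⟨∑ m ∈ range q, ‖∑ k ∈ range m, g k‖, fun n ↦ ?_⟩
  rw [← hper.map_mod_nat n]
  exact single_le_sum (f := fun m : ℕ ↦ ‖∑ k ∈ range m, g k‖) (fun _ _ ↦ norm_nonneg _)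
    (mem_range.2 (Nat.mod_lt _ (NeZero.pos q)))

theorem hasSum_zmod_div_mul_pow (g : ZMod q → ℂ) {x : ℂ} (hx : ‖x‖ < 1) :
    HasSum (fun n : ℕ ↦ g n / n * x ^ n)
      (-(q : ℂ)⁻¹ * ∑ k, 𝓕 g k * Complex.log (1 - stdAddChar k * x)) := by
  have hlog (k : ZMod q) := (Complex.hasSum_taylorSeries_neg_log (z := stdAddChar k * x)
    (by rwa [norm_mul, AddChar.norm_apply, one_mul])).mul_left (𝓕 g k)
  convert! (hasSum_sum (s := univ) fun k _ ↦ hlog k).mul_left (q : ℂ)⁻¹ using 1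
  · funext n
    have hinv : g n = (q : ℂ)⁻¹ * ∑ k, 𝓕 g k * stdAddChar k ^ n := by
      conv_lhs => rw [← LinearEquiv.symm_apply_apply 𝓕 g]
      simp only [invDFT_apply, smul_eq_mul, ← AddChar.map_nsmul_eq_pow, nsmul_eq_mul, mul_comm]
    rw [hinv, mul_div_assoc, mul_assoc, sum_div, sum_mul]
    congr 1
    exact sum_congr rfl fun k _ ↦ by ring
  · simp only [mul_neg, sum_neg_distrib, neg_mul]

theorem stdAddChar_ne_one {k : ZMod q} (hk : k ≠ 0) : stdAddChar k ≠ (1 : ℂ) := by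
  rw [← AddChar.map_zero_eq_one (stdAddChar (N := q))]
  exact injective_stdAddChar.ne hk

theorem one_sub_mem_slitPlane {z : ℂ} (hz : ‖z‖ = 1) (hz₁ : z ≠ 1) :
    1 - z ∈ Complex.slitPlane := by
  refine Or.inl ?_
  rw [Complex.sub_re, Complex.one_re, sub_pos]
  refine (hz ▸ Complex.re_le_norm z).lt_of_ne fun hre ↦ hz₁ ?_
  rw [← hz, Complex.re_eq_norm] at hre
  rw [← Complex.norm_of_nonneg' hre, hz, Complex.ofReal_one]

theorem tendsto_log_one_sub_mul {z : ℂ} (hz : ‖z‖ = 1) (hz₁ : z ≠ 1) :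
    Tendsto (fun x : ℝ ↦ Complex.log (1 - z * x)) (𝓝[<] 1) (𝓝 (Complex.log (1 - z))) := by
  have hcont : ContinuousAt (fun x : ℝ ↦ Complex.log (1 - z * x)) 1 :=
    ContinuousAt.clog (by fun_prop) (by simpa using one_sub_mem_slitPlane hz hz₁)
  simpa using hcont.tendsto.mono_left (nhdsWithin_le_nhds (s := Set.Iio 1))

theorem tendsto_norm_log_one_sub_atTop :
    Tendsto (fun x : ℝ ↦ ‖Complex.log (1 - x)‖) (𝓝[<] 1) atTop := by
  have hsub : Tendsto (fun x : ℝ ↦ 1 - x) (𝓝[<] 1) (𝓝[>] 0) := by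
    refine tendsto_nhdsWithin_iff.2 ⟨?_, ?_⟩
    · have hcont : ContinuousAt (fun x : ℝ ↦ 1 - x) 1 := by fun_prop
      simpa using hcont.tendsto.mono_left (nhdsWithin_le_nhds (s := Set.Iio 1))
    · filter_upwards [self_mem_nhdsWithin] with x hx
      simpa using hx
  refine (tendsto_abs_atBot_atTop.comp (Real.tendsto_log_nhdsGT_zero.comp hsub)).congr' ?_
  filter_upwards [self_mem_nhdsWithin] with x hx
  simp only [Function.comp_apply]
  rw [← Complex.ofReal_one, ← Complex.ofReal_sub,
    ← Complex.ofReal_log (sub_nonneg.2 (Set.mem_Iio.1 hx).le), Complex.norm_real, Real.norm_eq_abs]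

variable {g : ZMod q → ℂ} {l : ℂ}

theorem tendsto_sum_mul_log_one_sub
    (hl : Tendsto (fun N ↦ ∑ n ∈ range N, g n / n) atTop (𝓝 l)) :
    Tendsto (fun x : ℝ ↦ (∑ a, g a) * Complex.log (1 - x)) (𝓝[<] 1)
      (𝓝 (-q * l - ∑ k : {k : ZMod q // k ≠ 0}, 𝓕 g k * Complex.log (1 - stdAddChar k.1))) := by
  have habel := Complex.tendsto_tsum_powerSeries_nhdsWithin_lt hl
  rw [tendsto_map'_iff] at habel
  have hlogs := tendsto_finsetSum (univ : Finset {k : ZMod q // k ≠ 0}) fun k _ ↦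
    (tendsto_log_one_sub_mul (AddChar.norm_apply stdAddChar k.1)
      (stdAddChar_ne_one k.2)).const_mul (𝓕 g k)
  refine ((habel.const_mul (-(q : ℂ))).sub hlogs).congr' ?_
  filter_upwards [Ioo_mem_nhdsLT zero_lt_one] with x hx
  have hnorm : ‖(x : ℂ)‖ < 1 := by
    rw [Complex.norm_real, Real.norm_of_nonneg hx.1.le]
    exact hx.2
  rw [Function.comp_apply, (hasSum_zmod_div_mul_pow g hnorm).tsum_eq,
    Fintype.sum_eq_add_sum_subtype_ne _ (0 : ZMod q), neg_mul, neg_mul, mul_neg, neg_neg,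
    mul_inv_cancel_left₀ (NeZero.ne (q : ℂ)), add_sub_cancel_right, dft_apply_zero,
    AddChar.map_zero_eq_one, one_mul]

theorem sum_eq_zero_of_tendsto_sum_div
    (hl : Tendsto (fun N ↦ ∑ n ∈ range N, g n / n) atTop (𝓝 l)) : ∑ a, g a = 0 := by
  by_contra hne
  refine not_tendsto_nhds_of_tendsto_atTop ?_ _ (tendsto_sum_mul_log_one_sub hl).norm
  simp only [norm_mul]
  exact tendsto_norm_log_one_sub_atTop.const_mul_atTop (norm_pos_iff.2 hne)

theorem mul_add_sum_dft_mul_log_eq_zero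
    (hl : Tendsto (fun N ↦ ∑ n ∈ range N, g n / n) atTop (𝓝 l)) :
    q * l + ∑ k : {k : ZMod q // k ≠ 0}, 𝓕 g k * Complex.log (1 - stdAddChar k.1) = 0 := by
  have hlim := tendsto_sum_mul_log_one_sub hl
  simp only [sum_eq_zero_of_tendsto_sum_div hl, zero_mul] at hlim
  linear_combination -tendsto_nhds_unique hlim tendsto_const_nhds

end PeriodicSeries

/-! ### Okada's transformation of vanishing series -/

section Okada

open ZMod

variable {q : ℕ} [NeZero q]

theorem isPrimitiveRoot_stdAddChar (u : (ZMod q)ˣ) :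
    IsPrimitiveRoot (stdAddChar (u : ZMod q) : ℂ) q := by
  refine .mk_of_lt _ (NeZero.pos q) ?_ fun n hn hnq ↦ ?_
  · rw [← AddChar.map_nsmul_eq_pow, nsmul_eq_mul, CharP.cast_eq_zero, zero_mul,
      AddChar.map_zero_eq_one]
  · rw [← AddChar.map_nsmul_eq_pow, nsmul_eq_mul]
    refine stdAddChar_ne_one ?_
    rw [Ne, Units.mul_left_eq_zero, natCast_eq_zero_iff]
    exact Nat.not_dvd_of_pos_of_lt hn hnq

variable {K : Type*} [Field K] {z : K}

/-- The algebraic avatar in a cyclotomic field of the discrete Fourier transform of an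
integer-valued function on `ZMod q`, the root of unity `z` playing the role of `exp (2πi / q)`. -/
def algebraicDFT (z : K) (g : ZMod q → ℤ) (k : ZMod q) : K :=
  ∑ a, z ^ (-(a * k)).val * (g a : K)

theorem map_algebraicDFT {ψ : K →+* ℂ} {u : ZMod q}
    (hψ : ∀ a : ZMod q, ψ (z ^ a.val) = stdAddChar (u * a)) (g : ZMod q → ℤ) (k : ZMod q) :
    ψ (algebraicDFT z g k) = 𝓕 (fun a ↦ (g a : ℂ)) (u * k) := by
  simp only [algebraicDFT, dft_apply, map_sum, map_mul, map_intCast, hψ, smul_eq_mul]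
  refine sum_congr rfl fun a _ ↦ ?_
  rw [mul_neg, mul_left_comm]

theorem exists_embedding_pow_val_eq [NumberField K] [IsCyclotomicExtension {q} ℚ K]
    (hz : IsPrimitiveRoot z q) (u : (ZMod q)ˣ) :
    ∃ ψ : K →+* ℂ, ∀ a : ZMod q, ψ (z ^ a.val) = stdAddChar ((u : ZMod q) * a) := by
  have hirr := Polynomial.cyclotomic.irreducible_rat (NeZero.pos q)
  let E := hz.embeddingsEquivPrimitiveRoots ℂ hirr
  let y : primitiveRoots q ℂ :=
    ⟨stdAddChar (u : ZMod q), (mem_primitiveRoots (NeZero.pos q)).2 (isPrimitiveRoot_stdAddChar u)⟩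
  have hy : E.symm y z = stdAddChar (u : ZMod q) := by
    rw [← hz.embeddingsEquivPrimitiveRoots_apply_coe ℂ hirr]
    exact congrArg Subtype.val (E.apply_symm_apply y)
  refine ⟨(E.symm y : K →+* ℂ), fun a ↦ ?_⟩
  rw [map_pow, RingHom.coe_coe, hy, ← AddChar.map_nsmul_eq_pow, nsmul_eq_mul, natCast_zmod_val,
    mul_comm]

theorem sum_dft_mul_log_eq_zero_of_cyclotomic (K : Type*) [Field K] [NumberField K]
    [IsCyclotomicExtension {q} ℚ K] {g : ZMod q → ℤ}
    (h : ∑ k : {k : ZMod q // k ≠ 0},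
      𝓕 (fun a ↦ (g a : ℂ)) k * Complex.log (1 - stdAddChar k.1) = 0) (u : (ZMod q)ˣ) :
    ∑ k : {k : ZMod q // k ≠ 0},
      𝓕 (fun a ↦ (g a : ℂ)) (u * k) * Complex.log (1 - stdAddChar k.1) = 0 := by
  obtain ⟨z, hz⟩ :=
    IsCyclotomicExtension.exists_isPrimitiveRoot ℚ K (Set.mem_singleton q) (NeZero.ne q)
  obtain ⟨φ, hφ⟩ := exists_embedding_pow_val_eq hz 1
  obtain ⟨ψ, hψ⟩ := exists_embedding_pow_val_eq hz u
  have hint (k : {k : ZMod q // k ≠ 0}) : IsIntegral ℤ (1 - z ^ k.1.val) :=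
    isIntegral_one.sub ((hz.isIntegral (NeZero.pos q)).pow _)
  have hexp (k : {k : ZMod q // k ≠ 0}) :
      Complex.exp (Complex.log (1 - stdAddChar k.1)) = φ (⟨1 - z ^ k.1.val, hint k⟩ : 𝓞 K) := by
    rw [Complex.exp_log (sub_ne_zero.2 (stdAddChar_ne_one k.2).symm), map_sub φ, map_one, hφ,
      Units.val_one, one_mul]
  have hconj := sum_map_mul_log_eq_zero φ ψ (J := {k : ZMod q // k ≠ 0})
    (α := fun k ↦ ⟨_, hint k⟩) hexp (c := fun k ↦ algebraicDFT z g k)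
  simp only [map_algebraicDFT hφ, map_algebraicDFT hψ, Units.val_one, one_mul] at hconj
  exact hconj h

theorem sum_dft_mul_log_eq_zero {g : ZMod q → ℤ}
    (h : ∑ k : {k : ZMod q // k ≠ 0},
      𝓕 (fun a ↦ (g a : ℂ)) k * Complex.log (1 - stdAddChar k.1) = 0) (u : (ZMod q)ˣ) :
    ∑ k : {k : ZMod q // k ≠ 0},
      𝓕 (fun a ↦ (g a : ℂ)) (u * k) * Complex.log (1 - stdAddChar k.1) = 0 := by
  -- `NumberField` uses the `ℚ`-algebra structure of a division ring, not `CyclotomicField.algebra`.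
  have : IsCyclotomicExtension {q} ℚ (CyclotomicField q ℚ) := by
    convert! CyclotomicField.isCyclotomicExtension q ℚ
  exact sum_dft_mul_log_eq_zero_of_cyclotomic (CyclotomicField q ℚ) h u

theorem tendsto_LSeries_comp_unit_mul {g : ZMod q → ℤ} (hg : g 0 = 0)
    (hl : Tendsto (fun N ↦ ∑ n ∈ range N, (g n : ℂ) / n) atTop (𝓝 0)) (u : (ZMod q)ˣ) :
    Tendsto (fun s : ℝ ↦ LSeries (fun n ↦ (g (u * n) : ℂ)) s) (𝓝[>] 1) (𝓝 0) := by
  let gu : ZMod q → ℂ := fun a ↦ g (u * a)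
  have hsum : ∑ a, gu a = 0 := by
    rw [← sum_eq_zero_of_tendsto_sum_div (g := fun a ↦ (g a : ℂ)) hl]
    exact Equiv.sum_comp (Units.mulLeft u) fun a ↦ (g a : ℂ)
  obtain ⟨C, hC⟩ := exists_norm_sum_range_le hsum
  obtain ⟨l, hsum_div, hLSeries⟩ :=
    exists_tendsto_LSeries_nhdsGT_one (a := fun n ↦ gu n) (by simp [gu, hg]) hC
  have hlogs := mul_add_sum_dft_mul_log_eq_zero (g := fun a ↦ (g a : ℂ)) hl
  rw [mul_zero, zero_add] at hlogs
  have hlogs_gu := mul_add_sum_dft_mul_log_eq_zero hsum_div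
  simp only [gu, dft_comp_unitMul (fun a ↦ (g a : ℂ)), sum_dft_mul_log_eq_zero hlogs, add_zero,
    mul_eq_zero, NeZero.ne, false_or] at hlogs_gu
  rwa [hlogs_gu] at hLSeries

end Okada

/-! ### Möbius averaging over the reduced residue classes -/

section MoebiusAveraging

open ArithmeticFunction
open scoped ArithmeticFunction.zeta ArithmeticFunction.Moebius

variable {q : ℕ}

theorem natCast_totient_div_eq_prod (F : Type*) [Field F] [CharZero F] [NeZero q] :
    (q.totient : F) / q = ∏ p ∈ q.primeFactors, (1 - (p : F)⁻¹) := by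
  rw [div_eq_iff (NeZero.ne _), mul_comm]
  simpa using congrArg (Rat.cast : ℚ → F) q.totient_eq_mul_prod_factors

/-- The Möbius function restricted to the integers prime to `q`. -/
def coprimeMoebius (q : ℕ) : ArithmeticFunction ℤ :=
  ⟨fun n ↦ if n.Coprime q then μ n else 0, by simp⟩

/-- The indicator function of the positive integers all of whose prime factors divide `q`. -/
def factoredIndicator (q : ℕ) : ArithmeticFunction ℤ :=
  ⟨fun n ↦ if n ≠ 0 ∧ n.primeFactors ⊆ q.primeFactors then 1 else 0, by simp⟩

theorem coprimeMoebius_apply (q n : ℕ) :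
    coprimeMoebius q n = if n.Coprime q then μ n else 0 := rfl

theorem factoredIndicator_apply (q n : ℕ) :
    factoredIndicator q n = if n ≠ 0 ∧ n.primeFactors ⊆ q.primeFactors then 1 else 0 := rfl

theorem isMultiplicative_coprimeMoebius : (coprimeMoebius q).IsMultiplicative := by
  refine ⟨by simp [coprimeMoebius_apply], fun {m n} hmn ↦ ?_⟩
  simp only [coprimeMoebius_apply, isMultiplicative_moebius.map_mul_of_coprime hmn,
    Nat.coprime_mul_iff_left, ite_zero_mul_ite_zero]

theorem isMultiplicative_factoredIndicator : (factoredIndicator q).IsMultiplicative := by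
  refine IsMultiplicative.iff_ne_zero.2 ⟨by simp [factoredIndicator_apply], fun {m n} hm hn _ ↦ ?_⟩
  simp only [factoredIndicator_apply, mul_ne_zero_iff, ne_eq, hm, hn, not_false_eq_true, true_and,
    Nat.primeFactors_mul hm hn, union_subset_iff, ite_zero_mul_ite_zero, one_mul]

theorem zeta_mul_coprimeMoebius [NeZero q] :
    (ζ : ArithmeticFunction ℤ) * coprimeMoebius q = factoredIndicator q := by
  refine (IsMultiplicative.eq_iff_eq_on_prime_powers _
    (isMultiplicative_zeta.natCast.mul isMultiplicative_coprimeMoebius) _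
    isMultiplicative_factoredIndicator).2 fun p k hp ↦ ?_
  rw [coe_zeta_mul_apply, Nat.sum_divisors_prime_pow hp]
  rcases k with _ | k
  · simp [coprimeMoebius_apply, factoredIndicator_apply]
  have hsquare (i : ℕ) : coprimeMoebius q (p ^ (i + 1 + 1)) = 0 := by
    simp [coprimeMoebius_apply, moebius_apply_prime_pow hp]
  rw [sum_range_succ', sum_range_succ', sum_eq_zero fun i _ ↦ hsquare i, factoredIndicator_apply,
    Nat.primeFactors_prime_pow k.succ_ne_zero hp]
  by_cases hpq : p ∣ q
  · simp [coprimeMoebius_apply, hp.coprime_iff_not_dvd, hpq, hp, hp.ne_zero, NeZero.ne q]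
  · simp [coprimeMoebius_apply, hp.coprime_iff_not_dvd, hpq, moebius_apply_prime hp]

theorem LSeriesSummable_factoredIndicator {s : ℝ} (hs : 1 < s) :
    LSeriesSummable (fun n ↦ (factoredIndicator q n : ℂ)) s := by
  refine LSeriesSummable_of_bounded_of_one_lt_real (m := 1) (fun n _ ↦ ?_) hs
  rw [factoredIndicator_apply]
  split_ifs <;> simp

theorem LSeriesSummable_factoredIndicator_mul {g : ZMod q → ℤ} (hg : ∀ a, |g a| ≤ 1) {s : ℝ}
    (hs : 1 < s) : LSeriesSummable (fun n ↦ (factoredIndicator q n : ℂ) * g n) s := by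
  refine (LSeriesSummable_factoredIndicator (q := q) hs).norm.of_norm_bounded fun n ↦
    LSeries.norm_term_le _ ?_
  rw [norm_mul]
  refine mul_le_of_le_one_right (norm_nonneg _) ?_
  rw [Complex.norm_intCast]
  exact_mod_cast hg n

theorem norm_natCast_cpow_neg_lt_one {p : ℕ} (hp : p.Prime) {s : ℝ} (hs : 0 < s) :
    ‖(p : ℂ) ^ (-(s : ℂ))‖ < 1 := by
  rw [Complex.norm_natCast_cpow_of_pos hp.pos]
  exact Real.rpow_lt_one_of_one_lt_of_neg (by exact_mod_cast hp.one_lt) (by simpa using hs)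

theorem LSeries_factoredIndicator {s : ℝ} (hs : 0 < s) :
    LSeries (fun n ↦ (factoredIndicator q n : ℂ)) s =
      ∏ p ∈ q.primeFactors, (1 - (p : ℂ) ^ (-(s : ℂ)))⁻¹ := by
  have hs₀ : (s : ℂ) ≠ 0 := Complex.ofReal_ne_zero.2 hs.ne'
  have hsum := (EulerProduct.summable_and_hasSum_factoredNumbers_prod_filter_prime_geometric
    (f := (riemannZetaSummandHom hs₀ : ℕ →* ℂ))
    (fun hp ↦ norm_natCast_cpow_neg_lt_one hp hs) q.primeFactors).2
  rw [filter_true_of_mem fun p ↦ Nat.prime_of_mem_primeFactors] at hsum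
  refine Eq.trans (tsum_congr fun n ↦ ?_) (hasSum_subtype_iff_indicator.1 hsum).tsum_eq
  simp only [Set.indicator_apply, Nat.mem_factoredNumbers_iff_primeFactors_subset,
    LSeries.term_def, factoredIndicator_apply]
  by_cases hn : n ≠ 0 ∧ n.primeFactors ⊆ q.primeFactors
  · simp [hn, riemannZetaSummandHom, Complex.cpow_neg]
  · simp [hn]

theorem tendsto_LSeries_factoredIndicator [NeZero q] :
    Tendsto (fun s : ℝ ↦ LSeries (fun n ↦ (factoredIndicator q n : ℂ)) s) (𝓝[>] 1)
      (𝓝 ((q / q.totient : ℝ) : ℂ)) := by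
  have hlim : ((q / q.totient : ℝ) : ℂ) =
      ∏ p ∈ q.primeFactors, (1 - (p : ℂ) ^ (-((1 : ℝ) : ℂ)))⁻¹ := by
    simp only [Complex.ofReal_one, Complex.cpow_neg_one]
    rw [prod_inv_distrib, ← natCast_totient_div_eq_prod, inv_div, Complex.ofReal_div,
      Complex.ofReal_natCast, Complex.ofReal_natCast]
  have hcont : ContinuousAt
      (fun s : ℝ ↦ ∏ p ∈ q.primeFactors, (1 - (p : ℂ) ^ (-(s : ℂ)))⁻¹) 1 := by
    refine tendsto_finsetProd _ fun p hp ↦ ?_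
    have hprime := Nat.prime_of_mem_primeFactors hp
    refine Tendsto.inv₀ (Continuous.tendsto ?_ 1) (sub_ne_zero.2 fun h ↦ ?_)
    · exact continuous_const.sub
        (Continuous.const_cpow (by fun_prop) (Or.inl (Nat.cast_ne_zero.2 hprime.ne_zero)))
    · exact (norm_natCast_cpow_neg_lt_one hprime one_pos).ne (by rw [← h, norm_one])
  rw [hlim]
  refine (hcont.tendsto.mono_left nhdsWithin_le_nhds).congr' ?_
  filter_upwards [self_mem_nhdsWithin] with s hs
  exact (LSeries_factoredIndicator (one_pos.trans hs)).symm

theorem tendsto_ofReal_nhdsGT_one :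
    Tendsto (fun s : ℝ ↦ (s : ℂ)) (𝓝[>] 1) (𝓝[≠] 1) := by
  refine tendsto_nhdsWithin_iff.2 ⟨?_, ?_⟩
  · exact (Complex.continuous_ofReal.tendsto' 1 1 Complex.ofReal_one).mono_left nhdsWithin_le_nhds
  · filter_upwards [self_mem_nhdsWithin] with s hs
    exact Complex.ofReal_ne_one.2 (Set.mem_Ioi.1 hs).ne'

theorem exists_tendsto_inv_LFunction [NeZero q] (χ : DirichletCharacter ℂ q) :
    ∃ l, Tendsto (fun s ↦ (χ.LFunction s)⁻¹) (𝓝[≠] 1) (𝓝 l) := by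
  by_cases hχ : χ = 1
  · subst hχ
    have hres : ∏ p ∈ q.primeFactors, (1 - (p : ℂ)⁻¹) ≠ 0 := by
      rw [← natCast_totient_div_eq_prod]
      exact div_ne_zero (Nat.cast_ne_zero.2 (Nat.totient_pos.2 (NeZero.pos q)).ne') (NeZero.ne _)
    have hsub : Tendsto (fun s : ℂ ↦ s - 1) (𝓝[≠] 1) (𝓝 0) :=
      ((continuous_sub_right (1 : ℂ)).tendsto' 1 0 (sub_self 1)).mono_left nhdsWithin_le_nhds
    refine ⟨_, (hsub.mul
      ((DirichletCharacter.LFunctionTrivChar_residue_one (N := q)).inv₀ hres)).congr' ?_⟩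
    filter_upwards [self_mem_nhdsWithin] with s hs
    rw [mul_inv, mul_inv_cancel_left₀ (sub_ne_zero.2 hs), DirichletCharacter.LFunctionTrivChar]
  · exact ⟨_, (((DirichletCharacter.differentiable_LFunction hχ).continuous.tendsto 1).mono_left
      nhdsWithin_le_nhds).inv₀ (DirichletCharacter.LFunction_apply_one_ne_zero hχ)⟩

theorem exists_tendsto_LSeries_mul_moebius [NeZero q] (χ : DirichletCharacter ℂ q) :
    ∃ l, Tendsto (fun s : ℝ ↦ LSeries ((fun n : ℕ ↦ χ n) * fun n ↦ (μ n : ℂ)) s) (𝓝[>] 1)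
      (𝓝 l) := by
  obtain ⟨l, hl⟩ := exists_tendsto_inv_LFunction χ
  refine ⟨l, (hl.comp tendsto_ofReal_nhdsGT_one).congr' ?_⟩
  filter_upwards [self_mem_nhdsWithin] with s hs
  have hre : 1 < (s : ℂ).re := hs
  rw [Function.comp_apply, DirichletCharacter.LFunction_eq_LSeries χ hre]
  exact inv_eq_of_mul_eq_one_right (DirichletCharacter.LSeries.mul_mu_eq_one χ hre)

/-- The Möbius function restricted to the residue class `a` modulo `q`. -/
def residueMoebius (a : ZMod q) (n : ℕ) : ℂ :=
  if a = n then (μ n : ℂ) else 0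

theorem LSeriesSummable_residueMoebius (a : ZMod q) {s : ℝ} (hs : 1 < s) :
    LSeriesSummable (residueMoebius a) s := by
  refine LSeriesSummable_of_bounded_of_one_lt_real (m := 1) (fun n _ ↦ ?_) hs
  rw [residueMoebius]
  split_ifs
  · rw [Complex.norm_intCast]
    exact_mod_cast abs_moebius_le_one
  · simp

theorem residueMoebius_eq_sum [NeZero q] (u : (ZMod q)ˣ) :
    residueMoebius (u : ZMod q) = ∑ χ : DirichletCharacter ℂ q,
      ((q.totient : ℂ)⁻¹ * χ (u : ZMod q)⁻¹) • ((fun n : ℕ ↦ χ n) * fun n ↦ (μ n : ℂ)) := by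
  funext n
  simp only [Finset.sum_apply, Pi.smul_apply, Pi.mul_apply, smul_eq_mul]
  have horth := DirichletCharacter.sum_char_inv_mul_char_eq ℂ u.isUnit (n : ZMod q)
  have htotient : (q.totient : ℂ) ≠ 0 := Nat.cast_ne_zero.2 (Nat.totient_pos.2 (NeZero.pos q)).ne'
  calc residueMoebius (u : ZMod q) n
      = (q.totient : ℂ)⁻¹ * (if (u : ZMod q) = n then (q.totient : ℂ) else 0) * μ n := by
        rw [residueMoebius, mul_ite, mul_zero, inv_mul_cancel₀ htotient, ite_mul, one_mul, zero_mul]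
    _ = _ := by
        rw [← horth, mul_sum, sum_mul]
        exact sum_congr rfl fun χ _ ↦ by ring

theorem exists_tendsto_LSeries_residueMoebius [NeZero q] (u : (ZMod q)ˣ) :
    ∃ l, Tendsto (fun s : ℝ ↦ LSeries (residueMoebius (u : ZMod q)) s) (𝓝[>] 1) (𝓝 l) := by
  choose l hl using exists_tendsto_LSeries_mul_moebius (q := q)
  refine ⟨_, (tendsto_finsetSum univ fun χ _ ↦
    (hl χ).const_mul ((q.totient : ℂ)⁻¹ * χ (u : ZMod q)⁻¹)).congr' ?_⟩
  filter_upwards [self_mem_nhdsWithin] with s hs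
  have hre : 1 < (s : ℂ).re := hs
  have hsummable (χ : DirichletCharacter ℂ q) :=
    DirichletCharacter.LSeriesSummable_mul χ (LSeriesSummable_moebius_iff.2 hre)
  rw [residueMoebius_eq_sum, LSeries_sum fun χ _ ↦ (hsummable χ).smul _]
  exact sum_congr rfl fun χ _ ↦ (LSeries_smul _ _ _).symm

theorem sum_convolution_residueMoebius [NeZero q] (g : ZMod q → ℤ) (n : ℕ) :
    ∑ u : (ZMod q)ˣ, LSeries.convolution (fun n : ℕ ↦ (g (u * n) : ℂ))
      (residueMoebius (u : ZMod q)) n = factoredIndicator q n * g n := by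
  simp only [LSeries.convolution_def, ← zeta_mul_coprimeMoebius, coe_zeta_mul_apply]
  rw [sum_comm, Int.cast_sum, sum_mul,
    ← Nat.sum_divisorsAntidiagonal' fun _ b ↦ (coprimeMoebius q b : ℂ) * g n]
  refine sum_congr rfl fun ⟨a, b⟩ hab ↦ ?_
  obtain ⟨rfl, -⟩ := Nat.mem_divisorsAntidiagonal.1 hab
  by_cases hb : b.Coprime q
  · obtain ⟨v, hv⟩ := (ZMod.isUnit_iff_coprime b q).2 hb
    simp only [residueMoebius, ← hv, Units.val_inj, mul_ite, mul_zero, sum_ite_eq', mem_univ,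
      if_true, Nat.cast_mul]
    rw [coprimeMoebius_apply, if_pos hb, mul_comm, mul_comm (v : ZMod q)]
  · rw [coprimeMoebius_apply, if_neg hb, Int.cast_zero, zero_mul]
    refine sum_eq_zero fun u _ ↦ ?_
    rw [residueMoebius, if_neg, mul_zero]
    exact fun h ↦ hb ((ZMod.isUnit_iff_coprime b q).1 (h ▸ u.isUnit))

theorem tendsto_LSeries_factoredIndicator_mul [NeZero q] {g : ZMod q → ℤ} (hg : g 0 = 0)
    (hl : Tendsto (fun N ↦ ∑ n ∈ range N, (g n : ℂ) / n) atTop (𝓝 0)) :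
    Tendsto (fun s : ℝ ↦ LSeries (fun n ↦ (factoredIndicator q n : ℂ) * g n) s)
      (𝓝[>] 1) (𝓝 0) := by
  choose l hM using exists_tendsto_LSeries_residueMoebius (q := q)
  have hlim := tendsto_finsetSum univ fun u _ ↦ (tendsto_LSeries_comp_unit_mul hg hl u).mul (hM u)
  simp only [zero_mul, sum_const_zero] at hlim
  refine hlim.congr' ?_
  filter_upwards [self_mem_nhdsWithin] with s hs
  have hgs (u : (ZMod q)ˣ) : LSeriesSummable (fun n : ℕ ↦ (g (u * n) : ℂ)) s :=
    ZMod.LSeriesSummable_of_one_lt_re (fun a : ZMod q ↦ (g (u * a) : ℂ)) hs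
  have hMs (u : (ZMod q)ˣ) := LSeriesSummable_residueMoebius (u : ZMod q) hs
  simp only [← sum_convolution_residueMoebius]
  rw [← sum_fn, LSeries_sum fun u _ ↦ (hgs u).convolution (hMs u)]
  exact sum_congr rfl fun u _ ↦ (LSeries_convolution' (hgs u) (hMs u)).symm

end MoebiusAveraging

/-! ### The Erdős conjecture fails only if `q / φ(q) ≥ 2` -/

section ErdosConjecture

open scoped ComplexOrder

theorem apply_one_le_LSeries {a : ℕ → ℂ} (ha : 0 ≤ a) {s : ℝ} (hs : LSeriesSummable a s) :
    a 1 ≤ LSeries a s := by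
  have hterm (n : ℕ) : 0 ≤ LSeries.term a s n := by
    rw [LSeries.term_def]
    split_ifs with hn
    · exact le_rfl
    · rw [div_eq_mul_inv]
      exact mul_nonneg (ha n) (Complex.inv_natCast_cpow_ofReal_pos hn s).le
  have hle : LSeries.term a s 1 ≤ LSeries a s := hs.le_tsum 1 fun n _ ↦ hterm n
  rwa [LSeries.term_of_ne_zero one_ne_zero, Nat.cast_one, Complex.one_cpow, div_one] at hle

variable {q : ℕ} [NeZero q]

theorem one_add_sq_le_div_totient {g : ZMod q → ℤ} (hg₀ : g 0 = 0) (hg : ∀ a, |g a| ≤ 1)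
    (hl : Tendsto (fun N ↦ ∑ n ∈ range N, (g n : ℂ) / n) atTop (𝓝 0)) :
    1 + (g 1 : ℝ) ^ 2 ≤ q / q.totient := by
  let e : ℕ → ℂ := fun n ↦ factoredIndicator q n
  let w : ℕ → ℂ := (g 1 : ℂ) • (fun n : ℕ ↦ e n * g n) + e
  have he (n : ℕ) : 0 ≤ e n := by
    simp only [e, factoredIndicator_apply]
    split_ifs <;> simp
  have hw : 0 ≤ w := fun n ↦ by
    have hprod : |g 1 * g n| ≤ 1 := abs_mul (g 1) _ ▸ mul_le_one₀ (hg _) (abs_nonneg _) (hg _)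
    have hfactor : (0 : ℂ) ≤ (g 1 * g n + 1 : ℤ) := by
      exact_mod_cast (by linarith [(abs_le.1 hprod).1] : (0 : ℤ) ≤ g 1 * g n + 1)
    have hwn : w n = e n * (g 1 * g n + 1 : ℤ) := by
      simp only [w, Pi.add_apply, Pi.smul_apply, smul_eq_mul]
      push_cast
      ring
    exact hwn ▸ mul_nonneg (he n) hfactor
  have hw₁ : w 1 = ((1 + g 1 ^ 2 : ℝ) : ℂ) := by
    have he₁ : e 1 = 1 := by simp [e, factoredIndicator_apply]
    simp only [w, Pi.add_apply, Pi.smul_apply, smul_eq_mul, he₁, Nat.cast_one]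
    push_cast
    ring
  have hlim := ((tendsto_LSeries_factoredIndicator_mul hg₀ hl).const_mul (g 1 : ℂ)).add
    (tendsto_LSeries_factoredIndicator (q := q))
  rw [mul_zero, zero_add] at hlim
  refine Complex.real_le_real.1 (ge_of_tendsto hlim ?_)
  filter_upwards [self_mem_nhdsWithin] with s hs
  have hes : LSeriesSummable e s := LSeriesSummable_factoredIndicator hs
  have hegs : LSeriesSummable (fun n ↦ e n * g n) s := LSeriesSummable_factoredIndicator_mul hg hs
  rw [← LSeries_smul, ← LSeries_add (hegs.smul _) hes, ← hw₁]
  exact apply_one_le_LSeries hw ((hegs.smul _).add hes)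

theorem IsErdosian.exists_zmod {f : ℕ → ℤ} (hf : IsErdosian q f) :
    ∃ g : ZMod q → ℤ, g 0 = 0 ∧ (∀ a ≠ 0, g a = 1 ∨ g a = -1) ∧ ∀ n, 1 ≤ n → f n = g n := by
  obtain ⟨hper, hunit, hzero⟩ := hf
  have hq := NeZero.one_le (n := q)
  have hper_mul {n : ℕ} (hn : 1 ≤ n) (k : ℕ) : f (n + q * k) = f n := by
    induction k with
    | zero => rfl
    | succ k ih => rw [mul_add_one, ← add_assoc, hper _ (by omega), ih]
  refine ⟨fun a ↦ f (a.val + q), hzero _ (by omega) (by simp), fun a ha ↦ ?_, fun n hn ↦ ?_⟩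
  · refine hunit _ (by omega) ?_
    rwa [Nat.dvd_add_self_right, ← ZMod.natCast_eq_zero_iff, ZMod.natCast_zmod_val]
  · dsimp only
    rw [ZMod.val_natCast, ← hper_mul (n := n % q + q) (by omega) (n / q), add_right_comm,
      Nat.mod_add_div, hper n hn]

theorem ErdosConjectureFalse.two_le_div_totient (hq : q ≠ 1) (h : ErdosConjectureFalse q) :
    (2 : ℝ) ≤ q / q.totient := by
  obtain ⟨f, hf, hl⟩ := h
  obtain ⟨g, hg₀, hg, hfg⟩ := hf.exists_zmod
  have : Nontrivial (ZMod q) := ZMod.nontrivial_iff.2 hq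
  have hbound (a : ZMod q) : |g a| ≤ 1 := by
    by_cases ha : a = 0
    · simp [ha, hg₀]
    · rcases hg a ha with h | h <;> simp [h]
  have hsq : (g 1 : ℝ) ^ 2 = 1 := by
    rcases hg 1 one_ne_zero with h | h <;> simp [h]
  have hlg : Tendsto (fun N ↦ ∑ n ∈ range N, (g n : ℂ) / n) atTop (𝓝 0) := by
    rw [← tendsto_add_atTop_iff_nat 1, ← Complex.ofReal_zero]
    refine ((Complex.continuous_ofReal.tendsto 0).comp hl).congr fun N ↦ ?_
    rw [range_eq_Ico, sum_eq_sum_Ico_succ_bot N.succ_pos, Nat.cast_zero (R := ℂ), div_zero,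
      zero_add, Function.comp_apply, Complex.ofReal_sum, zero_add, Nat.succ_eq_add_one,
      Ico_add_one_right_eq_Icc]
    refine sum_congr rfl fun n hn ↦ ?_
    rw [hfg n (mem_Icc.1 hn).1]
    simp
  linarith [one_add_sq_le_div_totient hg₀ hbound hlg]

end ErdosConjecture

/-! ### Mean values over a residue class -/

section MeanValue

open Asymptotics

/-- The positive integers up to `X` that are congruent to `a` modulo `m`. -/
def residueClassUpTo (m a X : ℕ) : Finset ℕ := {q ∈ Ioc 0 X | q ≡ a [MOD m]}

variable {m a D X q : ℕ}

theorem mem_residueClassUpTo : q ∈ residueClassUpTo m a X ↔ (0 < q ∧ q ≤ X) ∧ q ≡ a [MOD m] := by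
  simp only [residueClassUpTo, mem_filter, mem_Ioc]

theorem abs_card_residueClassUpTo_sub_le (m a X : ℕ) [NeZero m] :
    |(#(residueClassUpTo m a X) : ℝ) - X / m| ≤ 1 := by
  have hcard := Nat.Ioc_filter_modEq_card 0 X (NeZero.pos m) a
  have hlt := Int.lt_floor_add_one (((X : ℚ) - a) / m)
  have hle := Int.floor_le (((X : ℚ) - a) / m)
  have hlt₀ := Int.lt_floor_add_one ((((0 : ℕ) : ℚ) - a) / m)
  have hle₀ := Int.floor_le ((((0 : ℕ) : ℚ) - a) / m)
  have hmono : ⌊(((0 : ℕ) : ℚ) - a) / m⌋ ≤ ⌊((X : ℚ) - a) / m⌋ :=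
    Int.floor_mono (by gcongr; simp)
  rw [max_eq_left (sub_nonneg.2 hmono)] at hcard
  have hcard' : (#(residueClassUpTo m a X) : ℚ) =
      ⌊((X : ℚ) - a) / m⌋ - ⌊(((0 : ℕ) : ℚ) - a) / m⌋ := mod_cast hcard
  have hdiff : ((X : ℚ) - a) / m - (((0 : ℕ) : ℚ) - a) / m = X / m := by
    rw [← sub_div, Nat.cast_zero, sub_sub_sub_cancel_right, sub_zero]
  have : |(#(residueClassUpTo m a X) : ℚ) - X / m| ≤ 1 := abs_le.2 ⟨by linarith, by linarith⟩
  simpa using (Rat.cast_le (K := ℝ)).2 this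

theorem card_filter_dvd_residueClassUpTo_le (a X : ℕ) [NeZero m] [NeZero D] (h : m.Coprime D) :
    (#{q ∈ residueClassUpTo m a X | D ∣ q} : ℝ) ≤ X / (m * D) + 1 := by
  obtain ⟨c, hca, hc₀⟩ := Nat.chineseRemainder h a 0
  have hsub : {q ∈ residueClassUpTo m a X | D ∣ q} ⊆ residueClassUpTo (m * D) c X := by
    intro q hq
    obtain ⟨hq, hDq⟩ := mem_filter.1 hq
    rw [mem_residueClassUpTo] at hq ⊢
    exact ⟨hq.1, (Nat.modEq_and_modEq_iff_modEq_mul h).1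
      ⟨hq.2.trans hca.symm, (Nat.modEq_zero_iff_dvd.2 hDq).trans hc₀.symm⟩⟩
  have hcard := (abs_le.1 (abs_card_residueClassUpTo_sub_le (m * D) c X)).2
  have hle : (#{q ∈ residueClassUpTo m a X | D ∣ q} : ℝ) ≤ #(residueClassUpTo (m * D) c X) :=
    mod_cast card_le_card hsub
  push_cast at hcard
  linarith

theorem card_filter_subset_primeFactors_mul_prod_le [NeZero m] (ha : a.Coprime m) (X : ℕ)
    (t : Finset ℕ) :
    (#{q ∈ residueClassUpTo m a X | t ⊆ q.primeFactors} : ℝ) * ∏ p ∈ t, (p : ℝ) ≤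
      X / m + min (X : ℝ) (∏ p ∈ t, (p : ℝ)) := by
  have hdvd (q : ℕ) (h : t ⊆ q.primeFactors) : ∏ p ∈ t, p ∣ q :=
    (prod_dvd_prod_of_subset _ _ _ h).trans (Nat.prod_primeFactors_dvd q)
  have hcard : #{q ∈ residueClassUpTo m a X | t ⊆ q.primeFactors} ≤
      #{q ∈ residueClassUpTo m a X | ∏ p ∈ t, p ∣ q} :=
    card_le_card (monotone_filter_right _ fun q _ ↦ hdvd q)
  rw [← Nat.cast_prod]
  obtain hempty | ⟨q, hq⟩ :=
    {q ∈ residueClassUpTo m a X | t ⊆ q.primeFactors}.eq_empty_or_nonempty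
  · rw [hempty, card_empty, Nat.cast_zero, zero_mul]
    positivity
  obtain ⟨hq, htq⟩ := mem_filter.1 hq
  obtain ⟨⟨hq₀, hqX⟩, hqa⟩ := mem_residueClassUpTo.1 hq
  generalize ∏ p ∈ t, p = D at hdvd hcard ⊢
  have hDq := hdvd q htq
  have : NeZero D := ⟨ne_zero_of_dvd_ne_zero hq₀.ne' hDq⟩
  have hcop : m.Coprime D :=
    (Nat.Coprime.coprime_dvd_left hDq (hqa.gcd_eq.trans ha)).symm
  rw [min_eq_right (mod_cast (Nat.le_of_dvd hq₀ hDq).trans hqX)]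
  calc (#{q ∈ residueClassUpTo m a X | t ⊆ q.primeFactors} : ℝ) * D
      ≤ (X / (m * D) + 1) * D := by
        gcongr
        exact (Nat.cast_le.2 hcard).trans (card_filter_dvd_residueClassUpTo_le a X hcop)
    _ = X / m + D := by
        have : (D : ℝ) ≠ 0 := NeZero.ne _
        field_simp

theorem isLittleO_tsum_mul_min {ι : Type*} {F D : ι → ℝ} (hF : Summable F) (hF₀ : ∀ i, 0 ≤ F i)
    (hD : ∀ i, 0 ≤ D i) :
    (fun X : ℕ ↦ ∑' i, F i * min (X : ℝ) (D i)) =o[atTop] fun X ↦ (X : ℝ) := by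
  rw [isLittleO_iff_tendsto' (by
    filter_upwards [eventually_ne_atTop 0] with X hX h using absurd h (mod_cast hX))]
  simp_rw [← tsum_div_const]
  rw [← tsum_zero (β := ι) (L := .unconditional _)]
  refine tendsto_tsum_of_dominated_convergence hF (fun i ↦ ?_) (.of_forall fun X i ↦ ?_)
  · refine squeeze_zero (fun X ↦ ?_) (fun X ↦ ?_)
      (tendsto_const_div_atTop_nhds_zero_nat (F i * D i))
    · have := hF₀ i
      have := hD i
      positivity
    · have := hF₀ i
      gcongr
      exact min_le_right _ _
  · have := hF₀ i
    have := hD i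
    rw [Real.norm_of_nonneg (by positivity)]
    exact div_le_of_le_mul₀ X.cast_nonneg (hF₀ i)
      (mul_le_mul_of_nonneg_left (min_le_left _ _) (hF₀ i))

theorem sum_prod_le_of_prod_one_add_le {ι : Type*} {h : ι → ℝ} {B : ℝ}
    (hh : ∀ p, 0 ≤ h p) (hB : ∀ t : Finset ι, ∏ p ∈ t, (1 + h p) ≤ B) (T : Finset (Finset ι)) :
    ∑ t ∈ T, ∏ p ∈ t, h p ≤ B := by
  classical
  refine le_trans ?_ (hB (T.biUnion id))
  rw [prod_one_add]
  exact sum_le_sum_of_subset_of_nonneg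
    (fun t ht ↦ mem_powerset.2 (subset_biUnion_of_mem id ht)) fun t _ _ ↦ prod_nonneg fun p _ ↦ hh p

theorem sum_prod_primeFactors_eq (h : ℕ → ℝ) (m a X : ℕ) :
    ∑ q ∈ residueClassUpTo m a X, ∏ p ∈ q.primeFactors, (1 + h p * p) =
      ∑ t ∈ (range (X + 1)).powerset, (∏ p ∈ t, h p) *
        (#{q ∈ residueClassUpTo m a X | t ⊆ q.primeFactors} * ∏ p ∈ t, (p : ℝ)) := by
  have hexpand (q : ℕ) (hq : q ∈ residueClassUpTo m a X) :
      ∏ p ∈ q.primeFactors, (1 + h p * p) = ∑ t ∈ (range (X + 1)).powerset,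
        if t ⊆ q.primeFactors then (∏ p ∈ t, h p) * ∏ p ∈ t, (p : ℝ) else 0 := by
    have hsub : q.primeFactors ⊆ range (X + 1) := fun p hp ↦ mem_range_succ_iff.2
      ((Nat.le_of_mem_primeFactors hp).trans (mem_residueClassUpTo.1 hq).1.2)
    rw [prod_one_add, ← sum_filter]
    refine sum_congr ?_ fun t _ ↦ prod_mul_distrib
    ext t
    simp only [mem_powerset, mem_filter]
    exact ⟨fun ht ↦ ⟨ht.trans hsub, ht⟩, And.right⟩
  rw [sum_congr rfl hexpand, sum_comm]
  refine sum_congr rfl fun t _ ↦ ?_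
  rw [← sum_filter, sum_const, nsmul_eq_mul]
  ring

theorem eventually_sum_prod_primeFactors_le [NeZero m] (ha : a.Coprime m) {h : ℕ → ℝ} {B : ℝ}
    (hh : ∀ p, 0 ≤ h p) (hB : ∀ t : Finset ℕ, ∏ p ∈ t, (1 + h p) ≤ B) {ε : ℝ} (hε : 0 < ε) :
    ∀ᶠ X : ℕ in atTop, ∑ q ∈ residueClassUpTo m a X, ∏ p ∈ q.primeFactors, (1 + h p * p) ≤
      (B / m + ε) * X := by
  have hsum := sum_prod_le_of_prod_one_add_le hh hB
  have hnonneg (t : Finset ℕ) : 0 ≤ ∏ p ∈ t, h p := prod_nonneg fun p _ ↦ hh p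
  have hsummable : Summable fun t : Finset ℕ ↦ ∏ p ∈ t, h p := summable_of_sum_le hnonneg hsum
  have hlittle := isLittleO_tsum_mul_min hsummable hnonneg
    (D := fun t : Finset ℕ ↦ ∏ p ∈ t, (p : ℝ)) fun t ↦ by positivity
  filter_upwards [hlittle.bound hε] with X hX
  have herror_nonneg (t : Finset ℕ) : 0 ≤ (∏ p ∈ t, h p) * min (X : ℝ) (∏ p ∈ t, (p : ℝ)) :=
    mul_nonneg (hnonneg t) (by positivity)
  have herror : Summable fun t : Finset ℕ ↦ (∏ p ∈ t, h p) * min (X : ℝ) (∏ p ∈ t, (p : ℝ)) :=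
    (hsummable.mul_right (X : ℝ)).of_nonneg_of_le herror_nonneg fun t ↦
      mul_le_mul_of_nonneg_left (min_le_left _ _) (hnonneg t)
  rw [Real.norm_of_nonneg (tsum_nonneg herror_nonneg), Real.norm_natCast] at hX
  calc ∑ q ∈ residueClassUpTo m a X, ∏ p ∈ q.primeFactors, (1 + h p * p)
      ≤ ∑ t ∈ (range (X + 1)).powerset,
          (∏ p ∈ t, h p) * (X / m + min (X : ℝ) (∏ p ∈ t, (p : ℝ))) := by
        rw [sum_prod_primeFactors_eq]
        gcongr with t
        · exact hnonneg t
        · exact card_filter_subset_primeFactors_mul_prod_le ha X t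
    _ = (∑ t ∈ (range (X + 1)).powerset, ∏ p ∈ t, h p) * (X / m) +
          ∑ t ∈ (range (X + 1)).powerset, (∏ p ∈ t, h p) * min (X : ℝ) (∏ p ∈ t, (p : ℝ)) := by
        simp_rw [mul_add, sum_add_distrib, sum_mul]
    _ ≤ B * (X / m) + ε * X := by
        gcongr
        · exact hsum _
        · exact (herror.sum_le_tsum _ fun t _ ↦ herror_nonneg t).trans hX
    _ = (B / m + ε) * X := by ring

end MeanValue

/-! ### Moments of `q / φ(q)` over odd `q` -/

section TotientMoment

/-- The weight `h` on odd primes for which `(q / φ(q)) ^ k = ∏ p ∣ q, (1 + p * h p)` for odd `q`. -/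
noncomputable def totientMomentWeight (k p : ℕ) : ℝ :=
  if p.Prime ∧ p ≠ 2 then (((p : ℝ) / (p - 1)) ^ k - 1) / p else 0

variable {k n q : ℕ}

theorem totientMomentWeight_nonneg (k p : ℕ) : 0 ≤ totientMomentWeight k p := by
  unfold totientMomentWeight
  split_ifs with hp
  · have hp₁ : (1 : ℝ) < p := mod_cast hp.1.one_lt
    have hratio : 1 ≤ (p : ℝ) / (p - 1) :=
      (one_le_div (sub_pos.2 hp₁)).2 (sub_le_self _ zero_le_one)
    exact div_nonneg (sub_nonneg.2 (one_le_pow₀ hratio)) p.cast_nonneg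
  · exact le_rfl

theorem totientMomentWeight_of_even (hn : Even n) : totientMomentWeight k n = 0 :=
  if_neg fun ⟨hprime, hne⟩ ↦ hne (hprime.even_iff.1 hn)

theorem div_totient_pow_eq_prod (k : ℕ) (hq : Odd q) :
    ((q : ℝ) / q.totient) ^ k =
      ∏ p ∈ q.primeFactors, (1 + totientMomentWeight k p * p) := by
  have : NeZero q := ⟨hq.pos.ne'⟩
  rw [← inv_div, natCast_totient_div_eq_prod, ← prod_inv_distrib, ← prod_pow]
  refine prod_congr rfl fun p hp ↦ ?_
  have hprime := Nat.prime_of_mem_primeFactors hp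
  have hodd : p ≠ 2 := by
    rintro rfl
    exact Nat.not_even_iff_odd.2 hq (even_iff_two_dvd.2 (Nat.dvd_of_mem_primeFactors hp))
  have hp₀ : (p : ℝ) ≠ 0 := mod_cast hprime.ne_zero
  rw [totientMomentWeight, if_pos ⟨hprime, hodd⟩, div_mul_cancel₀ _ hp₀, add_sub_cancel,
    inv_eq_one_div (p : ℝ), one_sub_div hp₀, inv_div]

theorem totientMomentWeight_six_le (hn : 17 ≤ n) :
    totientMomentWeight 6 n ≤ 7.2 / (n * (n - 1)) := by
  have hn' : (17 : ℝ) ≤ n := mod_cast hn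
  have hn₁ : (n : ℝ) - 1 ≠ 0 := by linarith
  unfold totientMomentWeight
  split_ifs
  · set x : ℝ := 1 / (n - 1) with hx
    have hx₀ : 0 ≤ x := one_div_nonneg.2 (by linarith)
    have hx₁ : x ≤ 1 / 16 := one_div_le_one_div_of_le (by norm_num) (by linarith)
    have hratio : (n : ℝ) / (n - 1) = 1 + x := by
      rw [hx]
      field_simp
      ring
    have hbound : (7.2 : ℝ) / (n * (n - 1)) = 7.2 * x / n := by
      rw [hx]
      field_simp
    have hpow (i : ℕ) : x ^ (i + 1) ≤ x * (1 / 16) ^ i := by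
      rw [pow_succ']
      gcongr
    rw [hratio, hbound]
    gcongr
    linarith [hpow 1, hpow 2, hpow 3, hpow 4, hpow 5]
  · exact div_nonneg (by norm_num) (mul_nonneg (by linarith) (by linarith))

/- The factor `1 - 3.6 / (15 + 2 * i)` makes the induction telescope: going from `i` to `i + 1`
it absorbs the tail bound `7.2 / (n * (n - 1))` at `n = 17 + 2 * i`. -/
theorem prod_range_one_add_totientMomentWeight_six_le (i : ℕ) :
    ∏ p ∈ range (17 + 2 * i), (1 + totientMomentWeight 6 p) ≤ 12.6 * (1 - 3.6 / (15 + 2 * i)) := by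
  induction i with
  | zero =>
    simp only [mul_zero, add_zero, prod_range_succ, prod_range_zero, totientMomentWeight]
    norm_num
  | succ i ih =>
    have heven : totientMomentWeight 6 (17 + 2 * i + 1) = 0 :=
      totientMomentWeight_of_even ⟨9 + i, by ring⟩
    have hodd := totientMomentWeight_six_le (n := 17 + 2 * i) (by lia)
    have hnonneg := totientMomentWeight_nonneg 6 (17 + 2 * i)
    have hfactor : 3.6 / (15 + 2 * (i : ℝ)) ≤ 1 := by
      rw [div_le_one (by positivity)]
      linarith [i.cast_nonneg (α := ℝ)]
    rw [show 17 + 2 * (i + 1) = 17 + 2 * i + 1 + 1 by ring, prod_range_succ, prod_range_succ,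
      heven, add_zero, mul_one]
    push_cast at hodd ⊢
    calc (∏ p ∈ range (17 + 2 * i), (1 + totientMomentWeight 6 p)) *
          (1 + totientMomentWeight 6 (17 + 2 * i))
        ≤ 12.6 * (1 - 3.6 / (15 + 2 * i)) * (1 + 7.2 / ((17 + 2 * i) * (17 + 2 * i - 1))) := by
          gcongr
      _ = 12.6 * (1 - 3.6 / (15 + 2 * (i + 1)) -
            33.12 / ((15 + 2 * i) * ((17 + 2 * i) * (16 + 2 * i)))) := by
          rw [show (17 + 2 * (i : ℝ) - 1) = 16 + 2 * i by ring,
            show (15 + 2 * ((i : ℝ) + 1)) = 17 + 2 * i by ring]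
          field_simp
          ring
      _ ≤ 12.6 * (1 - 3.6 / (15 + 2 * (i + 1))) := by
          exact mul_le_mul_of_nonneg_left (sub_le_self _ (by positivity)) (by norm_num)

theorem prod_one_add_totientMomentWeight_six_le (t : Finset ℕ) :
    ∏ p ∈ t, (1 + totientMomentWeight 6 p) ≤ 12.6 := by
  obtain ⟨N, hN⟩ := t.exists_nat_subset_range
  have hone (p : ℕ) : 1 ≤ 1 + totientMomentWeight 6 p :=
    le_add_of_nonneg_right (totientMomentWeight_nonneg 6 p)
  calc ∏ p ∈ t, (1 + totientMomentWeight 6 p)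
      ≤ ∏ p ∈ range (17 + 2 * N), (1 + totientMomentWeight 6 p) :=
        prod_le_prod_of_subset_of_one_le (hN.trans (range_subset_range.2 (by lia)))
          (fun p _ ↦ zero_le_one.trans (hone p)) fun p _ _ ↦ hone p
    _ ≤ 12.6 * (1 - 3.6 / (15 + 2 * N)) := prod_range_one_add_totientMomentWeight_six_le N
    _ ≤ 12.6 := mul_le_of_le_one_right (by norm_num) (sub_le_self _ (by positivity))

theorem eventually_sum_div_totient_pow_six_le {m a : ℕ} [NeZero m] (hm : Even m)
    (ha : a.Coprime m) {ε : ℝ} (hε : 0 < ε) :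
    ∀ᶠ X : ℕ in atTop, ∑ q ∈ residueClassUpTo m a X, ((q : ℝ) / q.totient) ^ 6 ≤
      (12.6 / m + ε) * X := by
  have hodd {X q : ℕ} (hq : q ∈ residueClassUpTo m a X) : Odd q := by
    have hcop : q.Coprime m := (mem_residueClassUpTo.1 hq).2.gcd_eq.trans ha
    exact Nat.coprime_two_right.1 (hcop.coprime_dvd_right hm.two_dvd)
  filter_upwards [eventually_sum_prod_primeFactors_le ha (totientMomentWeight_nonneg 6)
    prod_one_add_totientMomentWeight_six_le hε] with X hX
  rwa [sum_congr rfl fun q hq ↦ div_totient_pow_eq_prod 6 (hodd hq)]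

end TotientMoment

/-! ### Density of the moduli for which the conjecture holds -/

section Density

/- Chebyshev's inequality: a failure of the conjecture costs at least `2 ^ k` in the moment, every
other modulus at least `1`. The correction `2 ^ k - 1` is for `q = 1`, where the conjecture fails
because the only Erdősian function is zero. -/
open scoped Classical in
theorem two_pow_mul_card_sub_le (k : ℕ) {S : Finset ℕ} (hS : 0 ∉ S) :
    2 ^ k * (#S : ℝ) - (2 ^ k - 1) - ∑ q ∈ S, ((q : ℝ) / q.totient) ^ k ≤
      (2 ^ k - 1) * #{q ∈ S | ErdosConjectureHolds q} := by
  have htwo : (1 : ℝ) ≤ 2 ^ k := one_le_pow₀ one_le_two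
  have hpoint (q : ℕ) (hq : q ∈ S) :
      2 ^ k - (if q = 1 then 2 ^ k - 1 else 0) - ((q : ℝ) / q.totient) ^ k ≤
        (2 ^ k - 1) * if ErdosConjectureHolds q then 1 else 0 := by
    have : NeZero q := ⟨ne_of_mem_of_not_mem hq hS⟩
    have hone : 1 ≤ ((q : ℝ) / q.totient) ^ k := one_le_pow₀ <|
      (one_le_div (mod_cast Nat.totient_pos.2 (NeZero.pos q))).2 (mod_cast q.totient_le)
    by_cases hholds : ErdosConjectureHolds q
    · rw [if_pos hholds]
      split_ifs <;> linarith
    rw [if_neg hholds, mul_zero]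
    by_cases hq₁ : q = 1
    · rw [if_pos hq₁]
      linarith
    · rw [if_neg hq₁, sub_zero, sub_nonpos]
      exact pow_le_pow_left₀ zero_le_two
        (ErdosConjectureFalse.two_le_div_totient hq₁ (not_not.1 hholds)) k
  have hsum := sum_le_sum hpoint
  rw [sum_sub_distrib, sum_sub_distrib, sum_const, nsmul_eq_mul, sum_ite_eq', ← mul_sum,
    sum_boole] at hsum
  split_ifs at hsum <;> linarith

theorem isCoboundedUnder_ge_card_filter_div (P : ℕ → Prop) [DecidablePred P] {c : ℝ}
    (hc : 0 ≤ c) :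
    IsCoboundedUnder (· ≥ ·) atTop fun X : ℕ ↦ (#{q ∈ Icc 1 X | P q} : ℝ) / (X / c) := by
  refine (isBoundedUnder_of ⟨c, fun X ↦ ?_⟩).isCoboundedUnder_ge
  have hcard : (#{q ∈ Icc 1 X | P q} : ℝ) ≤ X :=
    mod_cast (card_filter_le _ _).trans_eq (Nat.card_Icc 1 X)
  rw [div_div_eq_mul_div]
  exact div_le_of_le_mul₀ X.cast_nonneg hc (by rw [mul_comm]; gcongr)

end Density

open scoped Classical in
theorem erdos_true_density_80 :
    0.80 ≤ atTop.liminf (fun X : ℕ =>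
      (((Finset.Icc 1 X).filter
        (fun q => q % 4 = 1 ∧ ErdosConjectureHolds q)).card : ℝ) / ((X : ℝ) / 4)) := by
  refine le_liminf_of_le (isCoboundedUnder_ge_card_filter_div _ zero_le_four) ?_
  filter_upwards [eventually_gt_atTop 1000, eventually_sum_div_totient_pow_six_le (m := 4) (a := 1)
    (by decide) (Nat.coprime_one_left 4) (show (0 : ℝ) < 1 / 100 by norm_num)] with X hX hmoment
  have hX' : (1000 : ℝ) < X := mod_cast hX
  have hclass : (Icc 1 X).filter (fun q ↦ q % 4 = 1 ∧ ErdosConjectureHolds q) =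
      {q ∈ residueClassUpTo 4 1 X | ErdosConjectureHolds q} := by
    rw [residueClassUpTo, filter_filter]
    rfl
  have hcount := (abs_le.1 (abs_card_residueClassUpTo_sub_le 4 1 X)).1
  have hholds := two_pow_mul_card_sub_le 6 (S := residueClassUpTo 4 1 X)
    fun h ↦ (mem_residueClassUpTo.1 h).1.1.false
  rw [hclass, le_div_iff₀ (by positivity)]
  push_cast at hcount hmoment
  linarith
end

section
/- Let q be a positive integer and f : ℕ → ℝ a function that is periodic with period q. Then the series Σ_{n≥1} f(n)/n converges (i.e., the partial sums Σ_{n=1}^N f(n)/n converge as N → ∞) if and only if Σ_{n=1}^q f(n) = 0. -/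
/-!
If `f` has period `q` and sum `0` over a period, its partial sums are periodic, hence bounded, and
Dirichlet's test makes `∑ a n • f n` converge for every antitone `a → 0`. Subtracting from a general
`f` its mean `m` over a period shows that `∑ n < N, a n • f n` and `(∑ n < N, a n) • m` differ by a
convergent sequence. When `∑ a n` diverges, as for `a n = 1 / (n + 1)`, the latter converges only
for `m = 0`.
-/

open Filter Topology Finset

theorem sum_Icc_one_eq_sum_range {M : Type*} [AddCommMonoid M] (f : ℕ → M) (N : ℕ) :
    ∑ n ∈ Icc 1 N, f n = ∑ n ∈ range N, f (n + 1) := by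
  rw [range_eq_Ico, sum_Ico_add' f 0 N 1, zero_add, Ico_add_one_right_eq_Icc]

theorem finite_range_of_periodic {α : Type*} {f : ℕ → α} {q : ℕ} (hq : 0 < q)
    (hf : Function.Periodic f q) : (Set.range f).Finite := by
  refine ((Set.finite_lt_nat q).image f).subset ?_
  rintro _ ⟨n, rfl⟩
  exact ⟨n % q, Nat.mod_lt n hq, hf.map_mod_nat n⟩

theorem periodic_sum_range_of_sum_eq_zero {M : Type*} [AddCommMonoid M] {f : ℕ → M} {q : ℕ}
    (hf : Function.Periodic f q) (hsum : ∑ i ∈ range q, f i = 0) :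
    Function.Periodic (fun n ↦ ∑ i ∈ range n, f i) q := by
  intro n
  calc ∑ i ∈ range (n + q), f i
      = ∑ i ∈ range q, f i + ∑ i ∈ range n, f (q + i) := by rw [add_comm, sum_range_add]
    _ = ∑ i ∈ range n, f i := by simp only [hsum, zero_add, add_comm q, hf _]

theorem eq_zero_of_tendsto_atTop_of_tendsto_smul {ι E : Type*} [AddCommGroup E] [Module ℝ E]
    [TopologicalSpace E] [ContinuousSMul ℝ E] [T2Space E] {l : Filter ι} [l.NeBot] {c : ι → ℝ}
    {x y : E} (hc : Tendsto c l atTop) (hcx : Tendsto (fun i ↦ c i • x) l (𝓝 y)) : x = 0 := by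
  have hzero : Tendsto (fun i ↦ (c i)⁻¹ • c i • x) l (𝓝 0) := by
    simpa only [Pi.inv_apply, zero_smul] using hc.inv_tendsto_atTop.smul hcx
  have hconst : (fun i ↦ (c i)⁻¹ • c i • x) =ᶠ[l] fun _ ↦ x := by
    filter_upwards [hc.eventually_ne_atTop 0] with i hi using inv_smul_smul₀ hi x
  exact tendsto_nhds_unique (tendsto_const_nhds.congr' hconst.symm) hzero

section PeriodicSeries

variable {E : Type*} [NormedAddCommGroup E] [NormedSpace ℝ E] {f : ℕ → E} {q : ℕ} {a : ℕ → ℝ}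

theorem cauchySeq_sum_smul_of_periodic_of_sum_eq_zero (hq : 0 < q) (hf : Function.Periodic f q)
    (ha : Antitone a) (ha0 : Tendsto a atTop (𝓝 0)) (hsum : ∑ i ∈ range q, f i = 0) :
    CauchySeq fun N ↦ ∑ n ∈ range N, a n • f n := by
  have hfin := finite_range_of_periodic hq (periodic_sum_range_of_sum_eq_zero hf hsum)
  obtain ⟨C, hC⟩ := hfin.isBounded.exists_norm_le
  exact ha.cauchySeq_series_mul_of_tendsto_zero_of_bounded ha0 fun n ↦ hC _ ⟨n, rfl⟩

theorem cauchySeq_sum_smul_sub_sum_smul_mean (hq : 0 < q) (hf : Function.Periodic f q)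
    (ha : Antitone a) (ha0 : Tendsto a atTop (𝓝 0)) :
    CauchySeq fun N ↦
      ∑ n ∈ range N, a n • f n - (∑ n ∈ range N, a n) • (q : ℝ)⁻¹ • ∑ i ∈ range q, f i := by
  set m := (q : ℝ)⁻¹ • ∑ i ∈ range q, f i with hm
  have hq0 : (q : ℝ) ≠ 0 := by positivity
  have hper : Function.Periodic (fun n ↦ f n - m) q := fun n ↦ by simp only [hf n]
  have hsum : ∑ i ∈ range q, (f i - m) = 0 := by
    rw [sum_sub_distrib, sum_const, card_range, ← Nat.cast_smul_eq_nsmul ℝ, hm,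
      smul_inv_smul₀ hq0, sub_self]
  simpa only [smul_sub, sum_sub_distrib, ← sum_smul] using
    cauchySeq_sum_smul_of_periodic_of_sum_eq_zero hq hper ha ha0 hsum

theorem periodic_sum_converges_iff_general [CompleteSpace E] (hq : 0 < q)
    (hf : Function.Periodic f q) (ha : Antitone a) (ha0 : Tendsto a atTop (𝓝 0))
    (ha_top : Tendsto (fun N ↦ ∑ n ∈ range N, a n) atTop atTop) :
    (∃ L, Tendsto (fun N ↦ ∑ n ∈ range N, a n • f n) atTop (𝓝 L)) ↔ ∑ i ∈ range q, f i = 0 := by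
  refine ⟨?_, fun hsum ↦ cauchySeq_tendsto_of_complete
    (cauchySeq_sum_smul_of_periodic_of_sum_eq_zero hq hf ha ha0 hsum)⟩
  rintro ⟨L, hL⟩
  obtain ⟨D, hD⟩ := cauchySeq_tendsto_of_complete
    (cauchySeq_sum_smul_sub_sum_smul_mean hq hf ha ha0)
  have hmean : (q : ℝ)⁻¹ • ∑ i ∈ range q, f i = 0 :=
    eq_zero_of_tendsto_atTop_of_tendsto_smul ha_top
      (by simpa only [sub_sub_cancel] using hL.sub hD)
  exact (smul_eq_zero_iff_right (by positivity)).mp hmean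

end PeriodicSeries

theorem periodic_sum_converges_iff (q : ℕ) (hq : 0 < q) (f : ℕ → ℝ)
    (hper : ∀ n : ℕ, 1 ≤ n → f (n + q) = f n) :
    (∃ L : ℝ, Tendsto (fun N : ℕ => ∑ n ∈ Finset.Icc 1 N, f n / n) atTop (nhds L)) ↔
      ∑ n ∈ Finset.Icc 1 q, f n = 0 := by
  have hshift : Function.Periodic (fun n ↦ f (n + 1)) q := fun n ↦ by
    simpa only [add_right_comm] using hper (n + 1) n.succ_pos
  simpa only [sum_Icc_one_eq_sum_range, smul_eq_mul, one_div_mul_eq_div, Nat.cast_add_one] using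
    periodic_sum_converges_iff_general hq hshift (fun _ _ ↦ Nat.one_div_le_one_div)
      tendsto_one_div_add_atTop_nhds_zero_nat Real.tendsto_sum_range_one_div_nat_succ_atTop
end
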